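/- Let μ be an ergodic process on Σ = 𝒜^{ℤ_{≥0}^d} with entropy rate h(μ) = h, let ε > 0, and let (φ_n)_{n≥1} be any sequence of injective maps φ_n : Σ^n → ∪_{l≥1} 𝒜^l from n-words to finite strings over 𝒜. Then for μ-almost every x, |φ_n(x^n)| > n^d·(h − ε) for all sufficiently large n; that is, no sequence of lossless codes beats the entropy bound infinitely often. -/

import Mathlib

open MeasureTheory Filter Topology

namespace SRU1408

/-- A site of the lattice `ℤ_{≥0}^d`. -/
abbrev Site (d : ℕ) := Fin d → ℕ

/-- An infinite array over the alphabet `Fin A`, i.e. an element of `Σ = 𝒜^{ℤ_{≥0}^d}`. -/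
abbrev Config (A d : ℕ) := Site d → Fin A

/-- A cubical `k`-word, i.e. an element of `Σ^k = 𝒜^{Λ_k}`. -/
abbrev Word (A d k : ℕ) := (Fin d → Fin k) → Fin A

variable {A d : ℕ}

/-- The pattern of `x` on the cube `Λ_k + c`, as a `k`-word. -/
def wordAt (x : Config A d) (k : ℕ) (c : Site d) : Word A d k :=
  fun i => x fun j => c j + (i j : ℕ)

/-- The lattice shift `σ_r`. -/
def shift (r : Site d) (x : Config A d) : Config A d := fun i => x (i + r)

/-- Stationarity: invariance under all shifts. -/
def Stationary (μ : Measure (Config A d)) : Prop := ∀ r : Site d, μ.map (shift r) = μ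

/-- Ergodicity: stationary, and every measurable set invariant under all shifts is trivial. -/
def ErgodicShift (μ : Measure (Config A d)) : Prop :=
  Stationary μ ∧ ∀ E : Set (Config A d), MeasurableSet E →
    (∀ r : Site d, shift r ⁻¹' E = E) → μ E = 0 ∨ μ E = 1

/-- The `k`-word marginal distribution `μ^k`, as a probability vector on `Σ^k`. -/
noncomputable def wordDist (μ : Measure (Config A d)) (k : ℕ) : Word A d k → ℝ :=
  fun w => (μ {x | wordAt x k 0 = w}).toReal

/-- Base-`A` entropy of a probability vector. -/
noncomputable def entH (A : ℕ) {W : Type*} [Fintype W] (p : W → ℝ) : ℝ :=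
  -∑ w, p w * Real.logb A (p w)

/-- `μ` has entropy rate `h` (base-`A` logarithms): `H(μ^n)/n^d → h`. -/
def HasEntropyRate (μ : Measure (Config A d)) (h : ℝ) : Prop :=
  Tendsto (fun n : ℕ => entH A (wordDist μ n) / (n : ℝ) ^ d) atTop (𝓝 h)

section Independence

variable {ι κ α : Type*}

/-- Functions on a finite product depending on disjoint sets of coordinates are independent. -/
theorem sum_mul_of_dependsOn_disjoint [Fintype ι] [DecidableEq ι] [Fintype α] {f g : (ι → α) → ℝ}
    {S T : Set ι} (hf : DependsOn f S) (hg : DependsOn g T) (hST : Disjoint S T) :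
    (Fintype.card (ι → α) : ℝ) * ∑ w, f w * g w = (∑ w, f w) * ∑ w, g w := by
  classical
  let e : (ι → α) × (ι → α) ≃ (ι → α) × (ι → α) :=
    { toFun := fun p => (S.piecewise p.1 p.2, S.piecewise p.2 p.1)
      invFun := fun p => (S.piecewise p.1 p.2, S.piecewise p.2 p.1)
      left_inv := fun p => by
        ext i <;> by_cases hi : i ∈ S <;> simp [hi]
      right_inv := fun p => by
        ext i <;> by_cases hi : i ∈ S <;> simp [hi] }
  rw [Finset.sum_mul_sum, ← Finset.sum_product', Finset.univ_product_univ]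
  have h1 : ∀ p : (ι → α) × (ι → α), f p.1 * g p.2 = f (e p).1 * g (e p).1 := by
    intro p
    have hf' : f p.1 = f (e p).1 := hf fun i hi => by simp [e, hi]
    have hg' : g p.2 = g (e p).1 := hg fun i hi => by
      have : i ∉ S := fun h => hST.notMem_of_mem_left h hi
      simp [e, this]
    rw [hf', hg']
  rw [Finset.sum_congr rfl fun p _ => h1 p, Equiv.sum_comp e fun p => f p.1 * g p.1,
    ← Finset.univ_product_univ, Finset.sum_product]
  simp [Finset.mul_sum]

/-- The average of a product of nonnegative functions depending on pairwise disjoint sets of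
coordinates is at most one as soon as each average is. -/
theorem sum_prod_le_card [Fintype ι] [DecidableEq ι] [Fintype α] [Nonempty (ι → α)] (t : Finset κ)
    (F : κ → (ι → α) → ℝ) (S : κ → Set ι) (h0 : ∀ k ∈ t, ∀ w, 0 ≤ F k w)
    (hF : ∀ k ∈ t, DependsOn (F k) (S k)) (hS : (t : Set κ).PairwiseDisjoint S)
    (h1 : ∀ k ∈ t, ∑ w, F k w ≤ Fintype.card (ι → α)) :
    ∑ w, ∏ k ∈ t, F k w ≤ Fintype.card (ι → α) := by
  classical
  induction t using Finset.induction_on with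
  | empty => simp
  | insert k t hk ih =>
    have hdep : DependsOn (fun w => ∏ k ∈ t, F k w) (⋃ k ∈ t, S k) := fun w w' h =>
      Finset.prod_congr rfl fun j hj => hF j (Finset.mem_insert_of_mem hj) fun i hi =>
        h i (Set.mem_biUnion hj hi)
    have hdisj : Disjoint (S k) (⋃ k ∈ t, S k) := by
      rw [Set.disjoint_iUnion₂_right]
      intro j hj
      exact hS (by simp) (by simp [hj]) (fun h => hk (h ▸ hj))
    have key := sum_mul_of_dependsOn_disjoint (hF k (Finset.mem_insert_self _ _)) hdep hdisj
    simp only [Finset.prod_insert hk]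
    have ih' := ih (fun j hj => h0 j (Finset.mem_insert_of_mem hj))
      (fun j hj => hF j (Finset.mem_insert_of_mem hj))
      (hS.subset (by simp)) (fun j hj => h1 j (Finset.mem_insert_of_mem hj))
    have hc : (0 : ℝ) < Fintype.card (ι → α) := by exact_mod_cast Fintype.card_pos
    refine le_of_mul_le_mul_left ?_ hc
    rw [key]
    exact mul_le_mul (h1 k (Finset.mem_insert_self _ _)) ih'
      (Finset.sum_nonneg fun w _ => Finset.prod_nonneg fun j hj =>
        h0 j (Finset.mem_insert_of_mem hj) w) hc.le

/-- Restricting along an injection of coordinates preserves averages. -/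
theorem card_mul_sum_comp [Fintype ι] [DecidableEq ι] [Fintype κ] [DecidableEq κ]
    [Fintype α] {e : κ → ι}
    (he : Function.Injective e) (f : (κ → α) → ℝ) :
    (Fintype.card (κ → α) : ℝ) * ∑ w : ι → α, f (w ∘ e) =
      Fintype.card (ι → α) * ∑ u, f u := by
  classical
  let E : (ι → α) × (κ → α) ≃ (ι → α) × (κ → α) :=
    { toFun := fun p => (Function.extend e p.2 p.1, p.1 ∘ e)
      invFun := fun p => (Function.extend e p.2 p.1, p.1 ∘ e)
      left_inv := fun p => by
        refine Prod.ext (funext fun i => ?_) (funext fun k => by simp [he.extend_apply])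
        by_cases hi : ∃ k, e k = i
        · obtain ⟨k, rfl⟩ := hi
          simp [he.extend_apply]
        · simp [Function.extend_apply' _ _ _ hi]
      right_inv := fun p => by
        refine Prod.ext (funext fun i => ?_) (funext fun k => by simp [he.extend_apply])
        by_cases hi : ∃ k, e k = i
        · obtain ⟨k, rfl⟩ := hi
          simp [he.extend_apply]
        · simp [Function.extend_apply' _ _ _ hi] }
  have h := Equiv.sum_comp E fun p => f p.2
  rw [← Finset.univ_product_univ, Finset.sum_product, Finset.sum_product] at h
  simpa [E, Finset.mul_sum] using h

end Independence

/-- Extension of a word on the cube `Λ_N` to a configuration. -/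
noncomputable def extendWord [NeZero A] {N : ℕ} (w : Word A d N) : Config A d :=
  open Classical in
  fun s => if h : ∀ j, s j < N then w (fun j => ⟨s j, h j⟩) else 0

/-- The cube of side `n` with lowest corner `v`. -/
def cube (v : Site d) (n : ℕ) : Finset (Site d) :=
  Fintype.piFinset fun j => Finset.Ico (v j) (v j + n)

theorem mem_cube {v s : Site d} {n : ℕ} : s ∈ cube v n ↔ ∀ j, v j ≤ s j ∧ s j < v j + n := by
  simp [cube]

theorem card_cube (v : Site d) (n : ℕ) : (cube v n).card = n ^ d := by
  simp [cube]

theorem corner_mem_cube (v : Site d) {n : ℕ} (hn : 0 < n) : v ∈ cube v n :=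
  mem_cube.2 fun _ => ⟨le_rfl, by omega⟩

/-- `cube v n` lies in the cube `Λ_N`. -/
def Fits (N : ℕ) (v : Site d) (n : ℕ) : Prop := ∀ j, v j + n ≤ N

theorem Fits.subset {N n : ℕ} {v : Site d} (h : Fits N v n) : cube v n ⊆ cube 0 N := by
  intro s hs
  rw [mem_cube] at hs ⊢
  intro j
  have := hs j
  have := h j
  simp only [Pi.zero_apply]
  omega

theorem extendWord_wordAt [NeZero A] (x : Config A d) {N : ℕ} {s : Site d}
    (hs : s ∈ cube 0 N) : extendWord (wordAt x N 0) s = x s := by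
  have h : ∀ j, s j < N := fun j => by simpa using (mem_cube.1 hs j).2
  simp [extendWord, wordAt, h]

theorem wordAt_extendWord_wordAt [NeZero A] (x : Config A d) {N n : ℕ} {v : Site d}
    (h : Fits N v n) : wordAt (extendWord (wordAt x N 0)) n v = wordAt x n v := by
  funext i
  refine extendWord_wordAt x (mem_cube.2 fun j => ?_)
  have := h j
  have := (i j).2
  simp only [Pi.zero_apply]
  omega

/-- The subword of an extended word, as a composition with an embedding of cubes. -/
theorem wordAt_extendWord [NeZero A] {N n : ℕ} {v : Site d} (h : Fits N v n) (w : Word A d N) :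
    wordAt (extendWord w) n v =
      w ∘ fun i j => ⟨v j + (i j : ℕ), by have := h j; have := (i j).2; omega⟩ := by
  funext i
  have h' : ∀ j, v j + (i j : ℕ) < N := fun j => by have := h j; have := (i j).2; omega
  simp [extendWord, wordAt, h']

theorem card_word (n : ℕ) : Fintype.card (Word A d n) = A ^ n ^ d := by
  simp

theorem sum_wordAt_extendWord [NeZero A] {N n : ℕ} {v : Site d} (h : Fits N v n)
    (f : Word A d n → ℝ) :
    ∑ w : Word A d N, (A : ℝ) ^ n ^ d * f (wordAt (extendWord w) n v) =
      (A : ℝ) ^ N ^ d * ∑ u, f u := by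
  have := card_mul_sum_comp (α := Fin A) (e := fun (i : Fin d → Fin n) (j : Fin d) =>
    (⟨v j + (i j : ℕ), by have := h j; have := (i j).2; omega⟩ : Fin N))
    (fun a b hab => by
      funext j
      have := congrFun hab j
      simp only [Fin.mk.injEq] at this
      exact Fin.ext (by omega)) f
  simp only [Fintype.card_pi, Fintype.card_fin, Finset.prod_const, Finset.card_univ] at this
  push_cast at this
  rw [← this, Finset.mul_sum]
  exact Finset.sum_congr rfl fun w _ => by rw [wordAt_extendWord h]

/-- A product of sub-probability densities on the words read off pairwise disjoint cubes is a
sub-probability density. -/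
theorem sum_prod_density_le [NeZero A] {N : ℕ} (t : Finset (Site d × ℕ))
    (q : Site d × ℕ → (n : ℕ) → Word A d n → ℝ) (h0 : ∀ p ∈ t, ∀ u, 0 ≤ q p p.2 u)
    (h1 : ∀ p ∈ t, ∑ u, q p p.2 u ≤ 1) (hfit : ∀ p ∈ t, Fits N p.1 p.2)
    (hdisj : (t : Set (Site d × ℕ)).PairwiseDisjoint fun p => cube p.1 p.2) :
    ∑ w : Word A d N, ∏ p ∈ t, (A : ℝ) ^ p.2 ^ d * q p p.2 (wordAt (extendWord w) p.2 p.1) ≤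
      (A : ℝ) ^ N ^ d := by
  have hcard : ((Fintype.card (Word A d N) : ℕ) : ℝ) = (A : ℝ) ^ N ^ d := by
    rw [card_word]; push_cast; rfl
  rw [← hcard]
  refine sum_prod_le_card t
    (fun p w => (A : ℝ) ^ p.2 ^ d * q p p.2 (wordAt (extendWord w) p.2 p.1))
    (fun p => {i | (fun j => (i j : ℕ)) ∈ cube p.1 p.2}) ?_ ?_ ?_ ?_
  · intro p hp w
    exact mul_nonneg (by positivity) (h0 p hp _)
  · intro p hp w w' hw
    have : wordAt (extendWord w) p.2 p.1 = wordAt (extendWord w') p.2 p.1 := by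
      rw [wordAt_extendWord (hfit p hp), wordAt_extendWord (hfit p hp)]
      funext i
      exact hw _ (mem_cube.2 fun j => ⟨by simp, by simp⟩)
    simp only [this]
  · intro p hp p' hp' hne
    refine Set.disjoint_left.2 fun i hi hi' => ?_
    exact Finset.disjoint_left.1 (hdisj hp hp' hne) hi hi'
  · intro p hp
    rw [sum_wordAt_extendWord (hfit p hp) (q p p.2), hcard]
    exact mul_le_of_le_one_right (by positivity) (h1 p hp)

/-- Gibbs' inequality. -/
theorem entH_le_sum {W : Type*} [Fintype W] (hA : 2 ≤ A) {p Z C : W → ℝ} (hp : ∀ w, 0 ≤ p w)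
    (hp1 : ∑ w, p w = 1) (hZ : ∀ w, 0 ≤ Z w) (hZ1 : ∑ w, Z w ≤ 1)
    (hC : ∀ w, 0 < p w → (A : ℝ) ^ (-C w) ≤ Z w) : entH A p ≤ ∑ w, p w * C w := by
  have hA1 : (1 : ℝ) < A := by exact_mod_cast hA
  have hlog : 0 < Real.log A := Real.log_pos hA1
  have key : ∀ w, -(p w * Real.log (p w)) - p w * C w * Real.log A ≤ Z w - p w := by
    intro w
    rcases (hp w).eq_or_lt with h | h
    · simpa [← h] using hZ w
    · have h1 := Real.log_le_sub_one_of_pos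
        (x := (A : ℝ) ^ (-C w) / p w) (by positivity)
      rw [Real.log_div (by positivity) h.ne', Real.log_rpow (by positivity)] at h1
      have h2 := mul_le_mul_of_nonneg_left h1 h.le
      rw [mul_sub, mul_sub, mul_div_cancel₀ _ h.ne'] at h2
      linarith [hC w h]
  have hsum := Finset.sum_le_sum fun w (_ : w ∈ Finset.univ) => key w
  rw [Finset.sum_sub_distrib, Finset.sum_sub_distrib, hp1, Finset.sum_neg_distrib,
    ← Finset.sum_mul] at hsum
  have : entH A p = (-∑ w, p w * Real.log (p w)) / Real.log A := by
    simp only [entH, Real.logb, neg_div, Finset.sum_div, mul_div_assoc]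
  rw [this, div_le_iff₀ hlog]
  linarith

theorem measurable_wordAt (n : ℕ) (v : Site d) :
    Measurable fun x : Config A d => wordAt x n v :=
  measurable_pi_lambda _ fun _ => measurable_pi_apply _

theorem measurable_shift (r : Site d) : Measurable (shift (A := A) r) :=
  measurable_pi_lambda _ fun _ => measurable_pi_apply _

theorem Stationary.measurePreserving {μ : Measure (Config A d)} (h : Stationary μ)
    (r : Site d) : MeasurePreserving (shift r) μ μ :=
  ⟨measurable_shift r, h r⟩

theorem wordAt_shift (x : Config A d) (n : ℕ) (v r : Site d) :
    wordAt (shift r x) n v = wordAt x n (v + r) := by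
  funext i
  simp only [wordAt, shift]
  congr 1
  funext j
  simp only [Pi.add_apply]
  omega

theorem wordAt_shift_zero (x : Config A d) (n : ℕ) (v : Site d) :
    wordAt (shift v x) n 0 = wordAt x n v := by
  rw [wordAt_shift, zero_add]

theorem wordDist_nonneg (μ : Measure (Config A d)) (n : ℕ) (w : Word A d n) :
    0 ≤ wordDist μ n w := ENNReal.toReal_nonneg

/-- Integration of a function of a word against the word distribution. -/
theorem sum_wordDist_mul (μ : Measure (Config A d)) [IsProbabilityMeasure μ] (n : ℕ)
    (f : Word A d n → ℝ) : ∑ w, wordDist μ n w * f w = ∫ x, f (wordAt x n 0) ∂μ := by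
  have hm := measurable_wordAt (A := A) n (0 : Site d)
  rw [← integral_map (φ := fun x : Config A d => wordAt x n 0) (f := f) hm.aemeasurable
    (measurable_of_finite f).aestronglyMeasurable]
  have : IsProbabilityMeasure (μ.map fun x : Config A d => wordAt x n 0) :=
    Measure.isProbabilityMeasure_map hm.aemeasurable
  rw [integral_fintype (Integrable.of_finite)]
  refine Finset.sum_congr rfl fun w _ => ?_
  rw [measureReal_def, Measure.map_apply hm (measurableSet_singleton w), smul_eq_mul]
  rfl

theorem sum_wordDist (μ : Measure (Config A d)) [IsProbabilityMeasure μ] (n : ℕ) :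
    ∑ w, wordDist μ n w = 1 := by
  simpa using sum_wordDist_mul μ n fun _ => 1

theorem wordDist_subword_pos [NeZero A] {μ : Measure (Config A d)} [IsProbabilityMeasure μ]
    (hμ : Stationary μ) {N n : ℕ} {v : Site d} (h : Fits N v n) {w : Word A d N}
    (hw : 0 < wordDist μ N w) : 0 < wordDist μ n (wordAt (extendWord w) n v) := by
  have hset : MeasurableSet {x : Config A d | wordAt x n 0 = wordAt (extendWord w) n v} :=
    measurable_wordAt n 0 (measurableSet_singleton _)
  refine hw.trans_le ?_
  unfold wordDist
  rw [← (hμ.measurePreserving v).measure_preimage hset.nullMeasurableSet]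
  refine ENNReal.toReal_mono (measure_ne_top _ _) (measure_mono fun x hx => ?_)
  simp only [Set.mem_preimage, Set.mem_ofPred_eq] at hx ⊢
  rw [wordAt_shift_zero, ← hx, wordAt_extendWord_wordAt x h]

open Classical in
/-- The cubes of side `K` inside `Λ_N` that avoid a given family of cubes. -/
noncomputable def freeBlocks (N K : ℕ) (l : Finset (Site d × ℕ)) : Finset (Site d) :=
  {v ∈ cube 0 N | Fits N v K ∧ ∀ p ∈ l, Disjoint (cube v K) (cube p.1 p.2)}

/-- The density attached to a marked family of cubes: coded words on the cubes, the `K`-word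
distribution on the free blocks with a given residue, uniform elsewhere. -/
theorem sum_packing_density_le [NeZero A] (μ : Measure (Config A d)) [IsProbabilityMeasure μ]
    {N K : ℕ} (hK : 0 < K) (o : Site d) (l : Finset (Site d × ℕ))
    (hfit : ∀ p ∈ l, Fits N p.1 p.2)
    (hdisj : (l : Set (Site d × ℕ)).PairwiseDisjoint fun p => cube p.1 p.2)
    (q : (n : ℕ) → Word A d n → ℝ) (h0 : ∀ n u, 0 ≤ q n u) (h1 : ∀ n, ∑ u, q n u ≤ 1) :
    ∑ w : Word A d N, (∏ p ∈ l, (A : ℝ) ^ p.2 ^ d * q p.2 (wordAt (extendWord w) p.2 p.1)) *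
      ∏ v ∈ freeBlocks N K l with ∀ j, v j % K = o j,
        (A : ℝ) ^ K ^ d * wordDist μ K (wordAt (extendWord w) K v) ≤ (A : ℝ) ^ N ^ d := by
  classical
  set b : Finset (Site d) := {v ∈ freeBlocks N K l | ∀ j, v j % K = o j} with hb
  have hb' : ∀ v ∈ b, Fits N v K ∧ (∀ p ∈ l, Disjoint (cube v K) (cube p.1 p.2)) ∧
      ∀ j, v j % K = o j := by
    intro v hv
    simp only [hb, freeBlocks, Finset.mem_filter] at hv
    exact ⟨hv.1.2.1, hv.1.2.2, hv.2⟩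
  have hinj : Function.Injective fun v : Site d => (v, K) := fun v v' h => congrArg Prod.fst h
  set b' : Finset (Site d × ℕ) := b.image fun v => (v, K)
  have hbl : ∀ p ∈ b', p ∉ l := by
    intro p hp hpl
    obtain ⟨v, hv, rfl⟩ := Finset.mem_image.1 hp
    exact Finset.disjoint_left.1 ((hb' v hv).2.1 _ hpl) (corner_mem_cube v hK)
      (corner_mem_cube v hK)
  have hd : Disjoint l b' := Finset.disjoint_right.2 hbl
  refine le_trans (le_of_eq ?_) (sum_prod_density_le (l ∪ b')
    (fun p n u => if p ∈ l then q n u else wordDist μ n u) ?_ ?_ ?_ ?_)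
  · refine Finset.sum_congr rfl fun w _ => ?_
    rw [Finset.prod_union hd]
    congr 1
    · exact Finset.prod_congr rfl fun p hp => by rw [if_pos hp]
    · rw [Finset.prod_image hinj.injOn]
      exact Finset.prod_congr rfl fun v hv => by
        rw [if_neg (hbl _ (Finset.mem_image_of_mem _ hv))]
  · intro p _ u
    split_ifs
    exacts [h0 _ _, wordDist_nonneg _ _ _]
  · intro p _
    by_cases hp : p ∈ l
    · simpa [hp] using h1 p.2
    · simpa [hp] using (sum_wordDist μ p.2).le
  · intro p hp
    rcases Finset.mem_union.1 hp with hp | hp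
    · exact hfit p hp
    · obtain ⟨v, hv, rfl⟩ := Finset.mem_image.1 hp
      exact (hb' v hv).1
  · rw [Finset.coe_union, Set.pairwiseDisjoint_union]
    refine ⟨hdisj, ?_, ?_⟩
    · intro p hp p' hp' hne
      obtain ⟨v, hv, rfl⟩ := Finset.mem_image.1 (Finset.mem_coe.1 hp)
      obtain ⟨v', hv', rfl⟩ := Finset.mem_image.1 (Finset.mem_coe.1 hp')
      refine Finset.disjoint_left.2 fun s hs hs' => hne ?_
      rw [mem_cube] at hs hs'
      refine Prod.ext (funext fun j => ?_) rfl
      have e : v j % K = v' j % K := by rw [(hb' v hv).2.2 j, (hb' v' hv').2.2 j]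
      have h1 := hs j
      have h2 := hs' j
      dsimp only at h1 h2 ⊢
      refine Nat.ModEq.eq_of_abs_lt (m := K) e ?_
      rw [abs_lt]
      constructor <;> omega
    · intro p hp p' hp' hne
      obtain ⟨v', hv', rfl⟩ := Finset.mem_image.1 (Finset.mem_coe.1 hp')
      exact ((hb' v' hv').2.1 p hp).symm

/-- The uniform sub-probability attached to a small set of words. -/
theorem sum_code_density_le (hA : 2 ≤ A) {n : ℕ} {θ : ℝ} (B : Finset (Word A d n))
    (hB : (B.card : ℝ) ≤ (A : ℝ) ^ ((n : ℝ) ^ d * θ + 1)) :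
    ∑ u, (if u ∈ B then (A : ℝ) ^ (-((n : ℝ) ^ d * θ + 1)) else 0) ≤ 1 := by
  have hA0 : (0 : ℝ) < A := by exact_mod_cast (by omega : 0 < A)
  rw [Finset.sum_ite_mem, Finset.univ_inter, Finset.sum_const, nsmul_eq_mul,
    Real.rpow_neg hA0.le, ← div_eq_mul_inv]
  exact div_le_one_of_le₀ hB (by positivity)

/-- The block entropy is at most the expected length of a code that marks a disjoint family of
cubes carrying words from small sets, uses a `K`-block code on the free blocks of a given
residue, and writes out all other sites. -/
theorem entH_wordDist_le [NeZero A] (hA : 2 ≤ A) {μ : Measure (Config A d)}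
    [IsProbabilityMeasure μ] (hμ : Stationary μ) {N K : ℕ} (hK : 0 < K) (o : Site d)
    {δ θ : ℝ} (P : Finset (Site d × ℕ)) (hfit : ∀ p ∈ P, Fits N p.1 p.2)
    (hP : ∑ p ∈ P, (A : ℝ) ^ (-(δ * (p.2 : ℝ) ^ d)) ≤ δ * (N : ℝ) ^ d * Real.log A)
    (B : (n : ℕ) → Finset (Word A d n))
    (hB : ∀ n, ((B n).card : ℝ) ≤ (A : ℝ) ^ ((n : ℝ) ^ d * θ + 1))
    (l : Word A d N → Finset (Site d × ℕ)) (hl : ∀ w, l w ⊆ P)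
    (hdisj : ∀ w, (l w : Set (Site d × ℕ)).PairwiseDisjoint fun p => cube p.1 p.2)
    (hlB : ∀ w, ∀ p ∈ l w, wordAt (extendWord w) p.2 p.1 ∈ B p.2) :
    entH A (wordDist μ N) ≤ ∑ w, wordDist μ N w * ((N : ℝ) ^ d * (1 + δ) -
      ∑ p ∈ l w, ((p.2 : ℝ) ^ d * (1 - θ - δ) - 1) -
      ∑ v ∈ freeBlocks N K (l w) with ∀ j, v j % K = o j,
        ((K : ℝ) ^ d + Real.logb A (wordDist μ K (wordAt (extendWord w) K v)))) := by
  classical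
  have hA1 : (1 : ℝ) < A := by exact_mod_cast hA
  have hA0 : (0 : ℝ) < A := by linarith
  have hlog : 0 < Real.log A := Real.log_pos hA1
  have hpow : ∀ k : ℕ, (A : ℝ) ^ k ^ d = (A : ℝ) ^ ((k : ℝ) ^ d) := fun k => by
    rw [← Real.rpow_natCast, Nat.cast_pow]
  let q : (n : ℕ) → Word A d n → ℝ := fun n u =>
    if u ∈ B n then (A : ℝ) ^ (-((n : ℝ) ^ d * θ + 1)) else 0
  have hq0 : ∀ n u, 0 ≤ q n u := fun n u => by
    simp only [q]; split_ifs <;> positivity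
  let D : Finset (Site d × ℕ) → Word A d N → ℝ := fun t w =>
    (∏ p ∈ t, (A : ℝ) ^ p.2 ^ d * q p.2 (wordAt (extendWord w) p.2 p.1)) *
      ∏ v ∈ freeBlocks N K t with ∀ j, v j % K = o j,
        (A : ℝ) ^ K ^ d * wordDist μ K (wordAt (extendWord w) K v)
  have hD0 : ∀ t w, 0 ≤ D t w := fun t w =>
    mul_nonneg (Finset.prod_nonneg fun p _ => mul_nonneg (by positivity) (hq0 _ _))
      (Finset.prod_nonneg fun v _ => mul_nonneg (by positivity) (wordDist_nonneg _ _ _))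
  let c : Finset (Site d × ℕ) → ℝ := fun t => ∏ p ∈ t, (A : ℝ) ^ (-(δ * (p.2 : ℝ) ^ d))
  have hc0 : ∀ t, 0 < c t := fun t => Finset.prod_pos fun p _ => by positivity
  let T : Finset (Finset (Site d × ℕ)) :=
    {t ∈ P.powerset | (t : Set (Site d × ℕ)).PairwiseDisjoint fun p => cube p.1 p.2}
  let Z : Word A d N → ℝ := fun w => (A : ℝ) ^ (-((N : ℝ) ^ d * (1 + δ))) * ∑ t ∈ T, c t * D t w
  have hcT : ∑ t ∈ T, c t ≤ (A : ℝ) ^ (δ * (N : ℝ) ^ d) := by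
    calc ∑ t ∈ T, c t ≤ ∑ t ∈ P.powerset, c t :=
          Finset.sum_le_sum_of_subset_of_nonneg (Finset.filter_subset _ _)
            fun t _ _ => (hc0 t).le
      _ = ∏ p ∈ P, (1 + (A : ℝ) ^ (-(δ * (p.2 : ℝ) ^ d))) := (Finset.prod_one_add _).symm
      _ ≤ ∏ p ∈ P, Real.exp ((A : ℝ) ^ (-(δ * (p.2 : ℝ) ^ d))) :=
          Finset.prod_le_prod (fun p _ => by positivity) fun p _ => by
            rw [add_comm]; exact Real.add_one_le_exp _
      _ = Real.exp (∑ p ∈ P, (A : ℝ) ^ (-(δ * (p.2 : ℝ) ^ d))) := (Real.exp_sum _ _).symm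
      _ ≤ Real.exp (Real.log A * (δ * (N : ℝ) ^ d)) := Real.exp_le_exp.2 (by linarith)
      _ = (A : ℝ) ^ (δ * (N : ℝ) ^ d) := (Real.rpow_def_of_pos hA0 _).symm
  refine entH_le_sum hA (Z := Z) (wordDist_nonneg μ N) (sum_wordDist μ N) ?_ ?_ ?_
  · exact fun w => mul_nonneg (by positivity)
      (Finset.sum_nonneg fun t _ => mul_nonneg (hc0 t).le (hD0 t w))
  · calc ∑ w, Z w = (A : ℝ) ^ (-((N : ℝ) ^ d * (1 + δ))) * ∑ t ∈ T, c t * ∑ w, D t w := by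
          simp only [Z, ← Finset.mul_sum]
          rw [Finset.sum_comm]
          simp only [Finset.mul_sum]
      _ ≤ (A : ℝ) ^ (-((N : ℝ) ^ d * (1 + δ))) * ∑ t ∈ T, c t * (A : ℝ) ^ N ^ d := by
          refine mul_le_mul_of_nonneg_left (Finset.sum_le_sum fun t ht => ?_) (by positivity)
          obtain ⟨ht1, ht2⟩ := Finset.mem_filter.1 ht
          exact mul_le_mul_of_nonneg_left (sum_packing_density_le μ hK o t
            (fun p hp => hfit p (Finset.mem_powerset.1 ht1 hp)) ht2 q hq0
            fun n => sum_code_density_le hA (B n) (hB n)) (hc0 t).le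
      _ ≤ (A : ℝ) ^ (-((N : ℝ) ^ d * (1 + δ))) *
            ((A : ℝ) ^ (δ * (N : ℝ) ^ d) * (A : ℝ) ^ N ^ d) := by
          rw [← Finset.sum_mul]
          gcongr
      _ = 1 := by
          rw [hpow, ← Real.rpow_add hA0, ← Real.rpow_add hA0]
          convert Real.rpow_zero _ using 2
          ring
  · intro w hw
    have hlT : l w ∈ T := Finset.mem_filter.2 ⟨Finset.mem_powerset.2 (hl w), hdisj w⟩
    have hDw : D (l w) w * c (l w) = (A : ℝ) ^ (∑ p ∈ l w, ((p.2 : ℝ) ^ d * (1 - θ - δ) - 1) +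
        ∑ v ∈ freeBlocks N K (l w) with ∀ j, v j % K = o j,
          ((K : ℝ) ^ d + Real.logb A (wordDist μ K (wordAt (extendWord w) K v)))) := by
      rw [Real.rpow_add hA0, Real.rpow_sum_of_pos hA0, Real.rpow_sum_of_pos hA0]
      simp only [D, c]
      rw [mul_right_comm, ← Finset.prod_mul_distrib]
      congr 1
      · refine Finset.prod_congr rfl fun p hp => ?_
        simp only [q, if_pos (hlB w p hp)]
        rw [hpow, ← Real.rpow_add hA0, ← Real.rpow_add hA0]
        congr 1
        ring
      · refine Finset.prod_congr rfl fun v hv => ?_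
        have hv' : Fits N v K := (Finset.mem_filter.1 (Finset.mem_filter.1 hv).1).2.1
        rw [Real.rpow_add hA0, Real.rpow_logb hA0 hA1.ne' (wordDist_subword_pos hμ hv' hw),
          hpow]
    have hle : c (l w) * D (l w) w ≤ ∑ t ∈ T, c t * D t w :=
      Finset.single_le_sum (f := fun t => c t * D t w)
        (fun t _ => mul_nonneg (hc0 t).le (hD0 t w)) hlT
    refine le_trans (le_of_eq ?_) (mul_le_mul_of_nonneg_left hle (by positivity))
    rw [mul_comm (c _), hDw, ← Real.rpow_add hA0]
    congr 1
    ring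

theorem sum_residues {K : ℕ} (hK : 0 < K) (F : Finset (Site d)) (a : Site d → ℝ) :
    ∑ o ∈ cube (0 : Site d) K, ∑ v ∈ F with ∀ j, v j % K = o j, a v = ∑ v ∈ F, a v := by
  rw [← Finset.sum_fiberwise_of_maps_to (s := F) (t := cube (0 : Site d) K)
    (g := fun v j => v j % K) (f := a)
    fun v _ => mem_cube.2 fun j => ⟨by simp, by simpa using Nat.mod_lt _ hK⟩]
  refine Finset.sum_congr rfl fun o _ => Finset.sum_congr ?_ fun _ _ => rfl
  ext v
  simp [funext_iff]

/-- Vitali covering lemma for lattice cubes: a disjoint subfamily covers at least a fraction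
`3⁻ᵈ` of the set of corners. -/
theorem exists_disjoint_cubes (J : Finset (Site d × ℕ)) (hJ : ∀ p ∈ J, 0 < p.2) :
    ∃ l ⊆ J, ((l : Set (Site d × ℕ)).PairwiseDisjoint fun p => cube p.1 p.2) ∧
      (J.image Prod.fst).card ≤ 3 ^ d * ∑ p ∈ l, p.2 ^ d := by
  classical
  obtain ⟨u, huJ, hu, hcov⟩ := Vitali.exists_disjoint_subfamily_covering_enlargement
    (fun p : Site d × ℕ => (cube p.1 p.2 : Set (Site d))) (J : Set (Site d × ℕ))
    (fun p => (p.2 : ℝ)) 2 one_lt_two (fun _ _ => by positivity) ((J.sup Prod.snd : ℕ) : ℝ)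
    (fun p hp => by exact_mod_cast Finset.le_sup (f := Prod.snd) (Finset.mem_coe.1 hp))
    fun p hp => ⟨p.1, corner_mem_cube _ (hJ p hp)⟩
  refine ⟨{p ∈ J | p ∈ u}, Finset.filter_subset _ _, ?_, ?_⟩
  · intro p hp p' hp' hne
    simp only [Finset.coe_filter, Set.mem_ofPred_eq] at hp hp'
    have := hu hp.2 hp'.2 hne
    exact Finset.disjoint_coe.1 this
  · have hsub : J.image Prod.fst ⊆ ({p ∈ J | p ∈ u} : Finset (Site d × ℕ)).biUnion fun p =>
        Fintype.piFinset fun j => Finset.Ico (p.1 j - 2 * p.2) (p.1 j + p.2) := by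
      intro v hv
      obtain ⟨p, hp, rfl⟩ := Finset.mem_image.1 hv
      obtain ⟨b, hb, ⟨s, hs⟩, hpb⟩ := hcov p hp
      have hpb' : p.2 ≤ 2 * b.2 := by exact_mod_cast hpb
      refine Finset.mem_biUnion.2 ⟨b, Finset.mem_filter.2 ⟨huJ hb, hb⟩,
        Fintype.mem_piFinset.2 fun j => Finset.mem_Ico.2 ?_⟩
      have h1 := mem_cube.1 (Finset.mem_coe.1 hs.1) j
      have h2 := mem_cube.1 (Finset.mem_coe.1 hs.2) j
      omega
    refine (Finset.card_le_card hsub).trans (Finset.card_biUnion_le.trans ?_)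
    rw [Finset.mul_sum]
    refine Finset.sum_le_sum fun p _ => ?_
    rw [Fintype.card_piFinset, ← mul_pow]
    refine (Finset.prod_le_pow_card _ _ (3 * p.2) fun j _ => ?_).trans (by simp)
    rw [Nat.card_Ico]
    omega

theorem card_slab_mul_le {n R : ℕ} (j : Fin d) (X Y : Fin d → Finset ℕ)
    (hX : (X j).card ≤ R) (hY : ∀ i, (Y i).card = n) :
    (Fintype.piFinset fun i => if i = j then X i else Y i).card * n ≤ R * n ^ d := by
  have h1 : (Fintype.piFinset fun i => if i = j then X i else Y i).card =
      (X j).card * ∏ i ∈ Finset.univ.erase j, n := by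
    rw [Fintype.card_piFinset, ← Finset.mul_prod_erase _ _ (Finset.mem_univ j)]
    congr 1
    · simp
    · exact Finset.prod_congr rfl fun i hi => by simp [Finset.ne_of_mem_erase hi, hY]
  have h2 : n ^ d = n * ∏ i ∈ Finset.univ.erase j, n := by
    rw [Finset.mul_prod_erase Finset.univ (fun _ : Fin d => n) (Finset.mem_univ j)]
    simp
  rw [h1, h2, mul_assoc, mul_comm _ n]
  exact Nat.mul_le_mul_right _ hX

theorem card_entering_cube_mul_le (X : Finset (Site d)) (c r : Site d) {n R : ℕ}
    (hr : ∀ j, r j ≤ R) :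
    {v ∈ X | v ∉ cube c n ∧ v + r ∈ cube c n}.card * n ≤ d * (R * n ^ d) := by
  classical
  have hinj : Function.Injective fun v : Site d => v + r := add_left_injective r
  have hsub : {v ∈ X | v ∉ cube c n ∧ v + r ∈ cube c n}.image (fun v => v + r) ⊆
      Finset.univ.biUnion fun j => Fintype.piFinset fun i =>
        if i = j then Finset.Ico (c i) (c i + R) else Finset.Ico (c i) (c i + n) := by
    intro s hs
    obtain ⟨v, hv, rfl⟩ := Finset.mem_image.1 hs
    obtain ⟨-, hv1, hv2⟩ := Finset.mem_filter.1 hv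
    rw [mem_cube] at hv1 hv2
    push Not at hv1
    obtain ⟨j, hj⟩ := hv1
    have hj' : v j < c j := by
      by_contra h
      have h3 := hj (by omega)
      have h4 := (hv2 j).2
      simp only [Pi.add_apply] at h4
      omega
    refine Finset.mem_biUnion.2 ⟨j, Finset.mem_univ _, Fintype.mem_piFinset.2 fun i => ?_⟩
    have hri := hr j
    have := hv2 i
    split_ifs with hij
    · subst hij
      simp only [Pi.add_apply, Finset.mem_Ico] at *
      omega
    · exact Finset.mem_Ico.2 this
  have hcard := (Finset.card_le_card hsub).trans Finset.card_biUnion_le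
  rw [Finset.card_image_of_injective _ hinj] at hcard
  refine (Nat.mul_le_mul_right n hcard).trans ?_
  rw [Finset.sum_mul]
  refine (Finset.sum_le_card_nsmul _ _ (R * n ^ d) fun j _ => ?_).trans (by simp)
  exact card_slab_mul_le (n := n) (R := R) j (fun i => Finset.Ico (c i) (c i + R))
    (fun i => Finset.Ico (c i) (c i + n)) (by simp) (by simp)

theorem card_leaving_cube_mul_le (r : Site d) {N R : ℕ} (hr : ∀ j, r j ≤ R) :
    {v ∈ cube (0 : Site d) N | v + r ∉ cube 0 N}.card * N ≤ d * (R * N ^ d) := by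
  classical
  have hsub : {v ∈ cube (0 : Site d) N | v + r ∉ cube 0 N} ⊆
      Finset.univ.biUnion fun j => Fintype.piFinset fun i =>
        if i = j then Finset.Ico (N - R) N else Finset.Ico 0 N := by
    intro v hv
    obtain ⟨hv1, hv2⟩ := Finset.mem_filter.1 hv
    rw [mem_cube] at hv1 hv2
    push Not at hv2
    obtain ⟨j, hj⟩ := hv2
    have hj' := hj (by simp)
    refine Finset.mem_biUnion.2 ⟨j, Finset.mem_univ _, Fintype.mem_piFinset.2 fun i => ?_⟩
    have hri := hr j
    have := hv1 i
    split_ifs with hij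
    · subst hij
      simp only [Pi.add_apply, Pi.zero_apply, Finset.mem_Ico] at *
      omega
    · simpa using this
  refine (Nat.mul_le_mul_right N ((Finset.card_le_card hsub).trans
    Finset.card_biUnion_le)).trans ?_
  rw [Finset.sum_mul]
  refine (Finset.sum_le_card_nsmul _ _ (R * N ^ d) fun j _ => ?_).trans (by simp)
  refine card_slab_mul_le (n := N) (R := R) j (fun _ => Finset.Ico (N - R) N)
    (fun _ => Finset.Ico 0 N) ?_ (by simp)
  rw [Nat.card_Ico]
  omega

/-- The sites of `Λ_N` not covered by a family of cubes. -/
def uncovered (N : ℕ) (l : Finset (Site d × ℕ)) : Finset (Site d) :=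
  cube 0 N \ l.biUnion fun p => cube p.1 p.2

theorem card_uncovered_add {N : ℕ} {l : Finset (Site d × ℕ)} (hfit : ∀ p ∈ l, Fits N p.1 p.2)
    (hdisj : (l : Set (Site d × ℕ)).PairwiseDisjoint fun p => cube p.1 p.2) :
    (uncovered N l).card + ∑ p ∈ l, p.2 ^ d = N ^ d := by
  have h1 : (l.biUnion fun p => cube p.1 p.2) ⊆ cube 0 N :=
    Finset.biUnion_subset.2 fun p hp => (hfit p hp).subset
  have h2 : (l.biUnion fun p => cube p.1 p.2).card = ∑ p ∈ l, p.2 ^ d := by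
    rw [Finset.card_biUnion fun p hp q hq h => hdisj hp hq h]
    simp [card_cube]
  rw [uncovered, ← h2, Finset.card_sdiff_add_card_eq_card h1, card_cube]

/-- A small translation moves few uncovered sites out of the uncovered region. -/
theorem card_leaving_uncovered_le {N m R : ℕ} (hN : 0 < N) (hm : 0 < m)
    {l : Finset (Site d × ℕ)} (hfit : ∀ p ∈ l, Fits N p.1 p.2)
    (hdisj : (l : Set (Site d × ℕ)).PairwiseDisjoint fun p => cube p.1 p.2)
    (hl : ∀ p ∈ l, m ≤ p.2) {r : Site d} (hr : ∀ j, r j ≤ R) :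
    ({v ∈ uncovered N l | v + r ∉ uncovered N l}.card : ℝ) ≤
      d * R * (1 / N + 1 / m) * (N : ℝ) ^ d := by
  classical
  have hsub : {v ∈ uncovered N l | v + r ∉ uncovered N l} ⊆
      {v ∈ cube (0 : Site d) N | v + r ∉ cube 0 N} ∪
        l.biUnion fun p => {v ∈ cube (0 : Site d) N | v ∉ cube p.1 p.2 ∧ v + r ∈ cube p.1 p.2} := by
    intro v hv
    simp only [uncovered, Finset.mem_filter, Finset.mem_sdiff, Finset.mem_biUnion, not_exists,
      not_and, Finset.mem_union, not_forall, not_not] at hv ⊢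
    obtain ⟨⟨hv1, hv2⟩, hv3⟩ := hv
    by_cases h : v + r ∈ cube 0 N
    · obtain ⟨p, hp, hpv⟩ := hv3 h
      exact Or.inr ⟨p, hp, hv1, hv2 p hp, hpv⟩
    · exact Or.inl ⟨hv1, h⟩
  have h1 : ({v ∈ cube (0 : Site d) N | v + r ∉ cube 0 N}.card : ℝ) ≤
      d * R * (1 / N) * (N : ℝ) ^ d := by
    have := card_leaving_cube_mul_le (N := N) r hr
    have h' : ({v ∈ cube (0 : Site d) N | v + r ∉ cube 0 N}.card : ℝ) * N ≤
      d * (R * (N : ℝ) ^ d) := by exact_mod_cast this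
    rw [← le_div_iff₀ (by positivity)] at h'
    exact h'.trans (le_of_eq (by ring))
  have h2 : ∀ p ∈ l, ({v ∈ cube (0 : Site d) N | v ∉ cube p.1 p.2 ∧ v + r ∈ cube p.1 p.2}.card : ℝ)
      ≤ d * R * (1 / m) * (p.2 : ℝ) ^ d := by
    intro p hp
    have hmp : (m : ℝ) ≤ p.2 := by exact_mod_cast hl p hp
    have hm' : (0 : ℝ) < m := by exact_mod_cast hm
    have := card_entering_cube_mul_le (n := p.2) (cube (0 : Site d) N) p.1 r hr
    have h' : ({v ∈ cube (0 : Site d) N | v ∉ cube p.1 p.2 ∧ v + r ∈ cube p.1 p.2}.card : ℝ) * m ≤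
      d * (R * (p.2 : ℝ) ^ d) := by
      refine le_trans (mul_le_mul_of_nonneg_left hmp (by positivity)) ?_
      exact_mod_cast this
    rw [← le_div_iff₀ (by positivity)] at h'
    exact h'.trans (le_of_eq (by ring))
  have h3 : (∑ p ∈ l, (p.2 : ℝ) ^ d) ≤ (N : ℝ) ^ d := by
    have := card_uncovered_add hfit hdisj
    exact_mod_cast (Nat.le_add_left _ _).trans this.le
  calc ({v ∈ uncovered N l | v + r ∉ uncovered N l}.card : ℝ)
      ≤ d * R * (1 / N) * (N : ℝ) ^ d + ∑ p ∈ l, d * R * (1 / m) * (p.2 : ℝ) ^ d := by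
        refine le_trans ?_ (add_le_add h1 (Finset.sum_le_sum h2))
        exact_mod_cast (Finset.card_le_card hsub).trans ((Finset.card_union_le _ _).trans
          (Nat.add_le_add_left Finset.card_biUnion_le _))
    _ ≤ d * R * (1 / N) * (N : ℝ) ^ d + d * R * (1 / m) * (N : ℝ) ^ d := by
        rw [← Finset.mul_sum]
        gcongr
    _ = _ := by ring

theorem freeBlocks_subset_uncovered {N K : ℕ} (hK : 0 < K) (l : Finset (Site d × ℕ)) :
    freeBlocks N K l ⊆ uncovered N l := by
  classical
  intro v hv
  simp only [freeBlocks, uncovered, Finset.mem_filter, Finset.mem_sdiff, Finset.mem_biUnion,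
    not_exists, not_and] at hv ⊢
  exact ⟨hv.1, fun p hp => Finset.disjoint_left.1 (hv.2.2 p hp) (corner_mem_cube v hK)⟩

theorem uncovered_sdiff_freeBlocks_subset {N K : ℕ} (hK : 0 < K) (l : Finset (Site d × ℕ)) :
    uncovered N l \ freeBlocks N K l ⊆
      (cube 0 K).biUnion fun s => {v ∈ uncovered N l | v + s ∉ uncovered N l} := by
  classical
  intro v hv
  obtain ⟨hv1, hv2⟩ := Finset.mem_sdiff.1 hv
  suffices ∃ s ∈ cube 0 K, v + s ∉ uncovered N l by
    obtain ⟨s, hs, hvs⟩ := this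
    exact Finset.mem_biUnion.2 ⟨s, hs, Finset.mem_filter.2 ⟨hv1, hvs⟩⟩
  have hv0 : v ∈ cube 0 N := (Finset.mem_sdiff.1 hv1).1
  by_cases hf : Fits N v K
  · obtain ⟨p, hp, hpv⟩ : ∃ p ∈ l, ¬ Disjoint (cube v K) (cube p.1 p.2) := by
      by_contra! h
      exact hv2 (Finset.mem_filter.2 ⟨hv0, hf, h⟩)
    obtain ⟨t, ht1, ht2⟩ := Finset.not_disjoint_iff.1 hpv
    rw [mem_cube] at ht1
    refine ⟨fun j => t j - v j, mem_cube.2 fun j => ?_, fun h => ?_⟩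
    · have := ht1 j
      simp only [Pi.zero_apply]
      omega
    · have : (v + fun j => t j - v j) = t := funext fun j => by
        have := ht1 j
        simp only [Pi.add_apply]
        omega
      rw [this] at h
      exact (Finset.mem_sdiff.1 h).2 (Finset.mem_biUnion.2 ⟨p, hp, ht2⟩)
  · simp only [Fits, not_forall] at hf
    obtain ⟨j, hj⟩ := hf
    refine ⟨fun _ => K - 1, mem_cube.2 fun i => ?_, fun h => ?_⟩
    · simp only [Pi.zero_apply]
      omega
    · have := (mem_cube.1 (Finset.mem_sdiff.1 h).1 j).2
      simp only [Pi.add_apply, Pi.zero_apply] at this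
      omega

theorem abs_sum_sub_sum_translate_le (U : Finset (Site d)) (r : Site d) (a : Site d → ℝ)
    {G : ℝ} (ha : ∀ v, |a v| ≤ G) :
    |∑ v ∈ U, a v - ∑ v ∈ U, a (v + r)| ≤ 2 * G * {v ∈ U | v + r ∉ U}.card := by
  classical
  have hinj : Function.Injective fun v : Site d => v + r := add_left_injective r
  rw [← Finset.sum_image (s := U) (g := fun v => v + r) (f := a) hinj.injOn,
    ← Finset.sum_sdiff_sub_sum_sdiff]
  have hc : (U.image fun v => v + r).card = U.card := Finset.card_image_of_injective _ hinj
  have h1 : ((U.image fun v => v + r) \ U).card = {v ∈ U | v + r ∉ U}.card := by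
    rw [← Finset.card_image_of_injective {v ∈ U | v + r ∉ U} hinj]
    congr 1
    ext s
    simp only [Finset.mem_sdiff, Finset.mem_image, Finset.mem_filter]
    constructor
    · rintro ⟨⟨v, hv, rfl⟩, h⟩
      exact ⟨v, ⟨hv, h⟩, rfl⟩
    · rintro ⟨v, ⟨hv, h⟩, rfl⟩
      exact ⟨⟨v, hv, rfl⟩, h⟩
  have h2 : (U \ U.image fun v => v + r).card = {v ∈ U | v + r ∉ U}.card := by
    rw [← h1, Finset.card_sdiff_comm hc.symm]
  have hb : ∀ s : Finset (Site d), |∑ v ∈ s, a v| ≤ s.card * G := fun s =>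
    (Finset.abs_sum_le_sum_abs _ _).trans ((Finset.sum_le_card_nsmul _ _ G fun v _ => ha v).trans
      (le_of_eq (nsmul_eq_mul _ _)))
  refine (abs_sub _ _).trans ?_
  have e1 := hb (U \ U.image fun v => v + r)
  have e2 := hb ((U.image fun v => v + r) \ U)
  rw [h2] at e1
  rw [h1] at e2
  linarith

/-- Summing over free blocks is almost the same as summing local averages over the uncovered
sites. -/
theorem sum_freeBlocks_ge {N K m R : ℕ} (hN : 0 < N) (hm : 0 < m) (hK : 0 < K) (hKR : K ≤ R)
    {l : Finset (Site d × ℕ)} (hfit : ∀ p ∈ l, Fits N p.1 p.2)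
    (hdisj : (l : Set (Site d × ℕ)).PairwiseDisjoint fun p => cube p.1 p.2)
    (hl : ∀ p ∈ l, m ≤ p.2) (a : Site d → ℝ) {G : ℝ} (ha : ∀ v, |a v| ≤ G)
    (s : Finset (Site d)) (c : Site d → ℝ) (hc : ∀ r ∈ s, 0 ≤ c r) (hc1 : ∑ r ∈ s, c r = 1)
    (hs : ∀ r ∈ s, ∀ j, r j ≤ R) :
    ∑ v ∈ uncovered N l, ∑ r ∈ s, c r * a (v + r) -
      (K ^ d + 2) * G * (d * R * (1 / N + 1 / m)) * (N : ℝ) ^ d ≤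
        ∑ v ∈ freeBlocks N K l, a v := by
  classical
  set E : ℝ := d * R * (1 / N + 1 / m) * (N : ℝ) ^ d with hE
  have hG : 0 ≤ G := (abs_nonneg _).trans (ha 0)
  have hleave : ∀ r : Site d, (∀ j, r j ≤ R) →
      ({v ∈ uncovered N l | v + r ∉ uncovered N l}.card : ℝ) ≤ E := fun r hr =>
    card_leaving_uncovered_le hN hm hfit hdisj hl hr
  have h1 : ∑ v ∈ uncovered N l, a v - ∑ v ∈ freeBlocks N K l, a v ≤ K ^ d * G * E := by
    rw [← Finset.sum_sdiff (freeBlocks_subset_uncovered hK l), add_sub_cancel_right]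
    calc ∑ v ∈ uncovered N l \ freeBlocks N K l, a v
        ≤ (uncovered N l \ freeBlocks N K l).card • G :=
          Finset.sum_le_card_nsmul _ _ _ fun v _ => (le_abs_self _).trans (ha v)
      _ = (uncovered N l \ freeBlocks N K l).card * G := nsmul_eq_mul _ _
      _ ≤ (K ^ d * E) * G := by
          refine mul_le_mul_of_nonneg_right ?_ hG
          have h2 := (Finset.card_le_card (uncovered_sdiff_freeBlocks_subset (N := N) hK l)).trans
            Finset.card_biUnion_le
          have h3 : ∑ r ∈ cube (0 : Site d) K,
              ({v ∈ uncovered N l | v + r ∉ uncovered N l}.card : ℝ) ≤ (cube (0 : Site d) K).card • E :=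
            Finset.sum_le_card_nsmul _ _ _ fun r hr => hleave r fun j => by
              have := (mem_cube.1 hr j).2
              simp only [Pi.zero_apply] at this
              omega
          rw [card_cube, nsmul_eq_mul] at h3
          push_cast at h3
          exact le_trans (by exact_mod_cast h2) h3
      _ = _ := by ring
  have h2 : ∑ v ∈ uncovered N l, ∑ r ∈ s, c r * a (v + r) - ∑ v ∈ uncovered N l, a v ≤
      2 * G * E := by
    rw [Finset.sum_comm]
    calc ∑ r ∈ s, ∑ v ∈ uncovered N l, c r * a (v + r) - ∑ v ∈ uncovered N l, a v
        = ∑ r ∈ s, c r * (∑ v ∈ uncovered N l, a (v + r) - ∑ v ∈ uncovered N l, a v) := by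
          simp only [mul_sub, Finset.sum_sub_distrib, ← Finset.mul_sum, ← Finset.sum_mul, hc1,
            one_mul]
      _ ≤ ∑ r ∈ s, c r * (2 * G * E) := by
          refine Finset.sum_le_sum fun r hr => mul_le_mul_of_nonneg_left ?_ (hc r hr)
          refine (le_abs_self _).trans ?_
          rw [abs_sub_comm]
          refine (abs_sum_sub_sum_translate_le _ r a ha).trans ?_
          exact mul_le_mul_of_nonneg_left (hleave r (hs r hr)) (by positivity)
      _ = _ := by rw [← Finset.sum_mul, hc1, one_mul]
  have : (K ^ d + 2) * G * (d * R * (1 / N + 1 / m)) * (N : ℝ) ^ d =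
      K ^ d * G * E + 2 * G * E := by rw [hE]; ring
  linarith

theorem shift_shift (r s : Site d) (x : Config A d) : shift r (shift s x) = shift (r + s) x := by
  funext i
  simp only [shift, add_assoc]

/-- Almost everywhere invariant functions of an ergodic process are constant. -/
theorem ErgodicShift.ae_eq_const {μ : Measure (Config A d)} [IsProbabilityMeasure μ]
    (hμ : ErgodicShift μ) {f : Config A d → ℝ} (hf : Measurable f)
    (hinv : ∀ r, f ∘ shift r =ᵐ[μ] f) : ∃ κ, f =ᵐ[μ] fun _ => κ := by
  refine exists_eventuallyEq_const_of_forall_separating MeasurableSet fun U hU => ?_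
  let E : Set (Config A d) := ⋃ a : Site d, ⋂ r : Site d, shift (r + a) ⁻¹' (f ⁻¹' U)
  have hE : MeasurableSet E :=
    MeasurableSet.iUnion fun a => MeasurableSet.iInter fun r => measurable_shift _ (hf hU)
  have hmem : ∀ x, x ∈ E ↔ ∃ a, ∀ r, f (shift (r + a) x) ∈ U := fun x => by simp [E]
  have hEinv : ∀ s : Site d, shift s ⁻¹' E = E := by
    intro s
    ext x
    rw [Set.mem_preimage, hmem, hmem]
    simp only [shift_shift]
    constructor
    · rintro ⟨a, ha⟩
      exact ⟨a + s, fun r => by rw [← add_assoc]; exact ha r⟩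
    · rintro ⟨a, ha⟩
      exact ⟨a, fun r => by rw [add_right_comm]; exact ha _⟩
  have hall : ∀ᵐ x ∂μ, ∀ r, f (shift r x) = f x := ae_all_iff.2 hinv
  rcases hμ.2 E hE hEinv with h | h
  · right
    have h' : ∀ᵐ x ∂μ, x ∉ E := measure_eq_zero_iff_ae_notMem.1 h
    filter_upwards [hall, h'] with x hx hxE hxU
    exact hxE ((hmem x).2 ⟨0, fun r => by rw [hx]; exact hxU⟩)
  · left
    have h' : ∀ᵐ x ∂μ, x ∈ E := (mem_ae_iff_prob_eq_one hE).2 h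
    filter_upwards [hall, h'] with x hx hxE
    obtain ⟨a, ha⟩ := (hmem x).1 hxE
    rw [← hx]
    exact ha 0

theorem coeFn_sum_smul_toLp {μ : Measure (Config A d)} {ι : Type*} (s : Finset ι) (c : ι → ℝ)
    {f : ι → Config A d → ℝ} (hf : ∀ r, MemLp (f r) 2 μ) :
    (↑(∑ r ∈ s, c r • (hf r).toLp) : Config A d → ℝ) =ᵐ[μ] fun x => ∑ r ∈ s, c r * f r x := by
  classical
  induction s using Finset.induction_on with
  | empty =>
    simp only [Finset.sum_empty]
    exact Lp.coeFn_zero ℝ 2 μ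
  | insert a s ha ih =>
    rw [Finset.sum_insert ha]
    filter_upwards [Lp.coeFn_add (c a • (hf a).toLp) (∑ r ∈ s, c r • (hf r).toLp),
      Lp.coeFn_smul (c a) (hf a).toLp, (hf a).coeFn_toLp, ih] with x h1 h2 h3 h4
    rw [h1, Pi.add_apply, h2, h4, Finset.sum_insert ha, Pi.smul_apply, h3, smul_eq_mul]

/-- The closed convex hull of the translates of a square integrable function contains a
constant. -/
theorem ErgodicShift.const_mem_closure_convexHull {μ : Measure (Config A d)}
    [IsProbabilityMeasure μ] (hμ : ErgodicShift μ) {ψ : Config A d → ℝ}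
    (hL : ∀ r, MemLp (ψ ∘ shift r) 2 μ) :
    ∃ (z : Lp ℝ 2 μ) (κ : ℝ), (z : Config A d → ℝ) =ᵐ[μ] (fun _ => κ) ∧
      z ∈ closure (convexHull ℝ (Set.range fun r => (hL r).toLp)) := by
  have hmp := hμ.1.measurePreserving
  let U : Site d → Lp ℝ 2 μ →ₗᵢ[ℝ] Lp ℝ 2 μ := fun r =>
    Lp.compMeasurePreservingₗᵢ ℝ (shift r) (hmp r)
  have hU : ∀ r s, U s (hL r).toLp = (hL (r + s)).toLp := by
    intro r s
    have : U s (hL r).toLp = ((hL r).comp_measurePreserving (hmp s)).toLp :=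
      Lp.toLp_compMeasurePreserving (hL r) (hmp s)
    rw [this]
    congr 1
    funext x
    simp only [Function.comp, shift_shift]
  let V : Site d → Lp ℝ 2 μ := fun r => (hL r).toLp
  let C := closure (convexHull ℝ (Set.range V))
  have hCconv : Convex ℝ C := (convex_convexHull ℝ _).closure
  have hUC : ∀ s, ∀ y ∈ C, U s y ∈ C := by
    intro s y hy
    refine map_mem_closure (U s).continuous hy fun y hy => ?_
    have h1 : U s y ∈ (U s).toLinearMap '' convexHull ℝ (Set.range V) := ⟨y, hy, rfl⟩
    rw [LinearMap.image_convexHull] at h1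
    refine convexHull_mono ?_ h1
    rintro _ ⟨_, ⟨r, rfl⟩, rfl⟩
    exact ⟨r + s, (hU r s).symm⟩
  obtain ⟨z, hzC, hz⟩ := exists_norm_eq_iInf_of_complete_convex
    (K := C) ⟨V 0, subset_closure (subset_convexHull ℝ _ ⟨0, rfl⟩)⟩ isClosed_closure.isComplete
    hCconv 0
  rw [norm_eq_iInf_iff_real_inner_le_zero hCconv hzC] at hz
  have hfix : ∀ s, U s z = z := by
    intro s
    have h1 := hz _ (hUC s z hzC)
    rw [zero_sub, inner_neg_left, inner_sub_right, real_inner_self_eq_norm_sq] at h1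
    have h2 : ‖z - U s z‖ ^ 2 ≤ 0 := by
      rw [norm_sub_sq_real, (U s).norm_map]
      linarith
    have h3 : ‖z - U s z‖ = 0 := by nlinarith [norm_nonneg (z - U s z)]
    exact (sub_eq_zero.1 (norm_eq_zero.1 h3)).symm
  obtain ⟨κ, hκ⟩ := hμ.ae_eq_const (Lp.stronglyMeasurable z).measurable fun s => by
    have h1 := Lp.coeFn_compMeasurePreserving z (hmp s)
    have h2 : Lp.compMeasurePreserving (shift s) (hmp s) z = z := hfix s
    rw [h2] at h1
    exact h1.symm
  exact ⟨z, κ, hκ, hzC⟩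

/-- Mean ergodic theorem: some convex combination of translates is close to the mean. -/
theorem ErgodicShift.exists_average {μ : Measure (Config A d)} [IsProbabilityMeasure μ]
    (hμ : ErgodicShift μ) {ψ : Config A d → ℝ} (hψ : Measurable ψ) {G : ℝ}
    (hG : ∀ x, |ψ x| ≤ G) {δ : ℝ} (hδ : 0 < δ) :
    ∃ (s : Finset (Site d)) (c : Site d → ℝ), (∀ r ∈ s, 0 ≤ c r) ∧ ∑ r ∈ s, c r = 1 ∧
      ∫ x, |∑ r ∈ s, c r * ψ (shift r x) - ∫ y, ψ y ∂μ| ∂μ ≤ δ := by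
  have hmp := hμ.1.measurePreserving
  have hL : MemLp ψ 2 μ := MemLp.of_bound hψ.aestronglyMeasurable G (ae_of_all _ hG)
  have hLr : ∀ r, MemLp (ψ ∘ shift r) 2 μ := fun r => hL.comp_measurePreserving (hmp r)
  obtain ⟨z, κ, hκ, hzC⟩ := hμ.const_mem_closure_convexHull hLr
  set V : Site d → Lp ℝ 2 μ := fun r => (hLr r).toLp with hV
  obtain ⟨y, hy, hyz⟩ := Metric.mem_closure_iff.1 hzC (δ / 2) (half_pos hδ)
  rw [convexHull_range_eq_exists_affineCombination] at hy
  obtain ⟨s, c, hc0, hc1, rfl⟩ := hy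
  rw [Finset.affineCombination_eq_linear_combination s V c hc1, dist_comm, dist_eq_norm] at hyz
  refine ⟨s, c, hc0, hc1, ?_⟩
  set Y : Config A d → ℝ := fun x => ∑ r ∈ s, c r * ψ (shift r x) with hY
  have hYm : Measurable Y :=
    Finset.measurable_sum _ fun r _ => (hψ.comp (measurable_shift r)).const_mul _
  have hint : ∀ r, Integrable (fun x => ψ (shift r x)) μ := fun r =>
    (hLr r).integrable (by norm_num)
  have hYi : Integrable Y μ := integrable_finsetSum _ fun r _ => (hint r).const_mul _
  have hYint : ∫ x, Y x ∂μ = ∫ x, ψ x ∂μ := by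
    rw [hY, integral_finsetSum _ fun r _ => (hint r).const_mul _]
    have : ∀ r, ∫ x, c r * ψ (shift r x) ∂μ = c r * ∫ x, ψ x ∂μ := fun r => by
      rw [integral_const_mul]
      congr 1
      have := integral_map (μ := μ) (measurable_shift (A := A) r).aemeasurable
        (f := ψ) hψ.aestronglyMeasurable
      rw [← this, hμ.1 r]
    rw [Finset.sum_congr rfl fun r _ => this r, ← Finset.sum_mul, hc1, one_mul]
  have hae : (↑(∑ r ∈ s, c r • V r - z) : Config A d → ℝ) =ᵐ[μ] fun x => Y x - κ := by
    have h1 : (↑(∑ r ∈ s, c r • V r) : Config A d → ℝ) =ᵐ[μ] Y := coeFn_sum_smul_toLp s c hLr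
    filter_upwards [Lp.coeFn_sub (∑ r ∈ s, c r • V r) z, h1, hκ] with x hx hx1 hx2
    rw [hx, Pi.sub_apply, hx1, hx2]
  have hle : ∫ x, |Y x - κ| ∂μ ≤ δ / 2 := by
    have h1 : ∫ x, |Y x - κ| ∂μ = (eLpNorm (fun x => Y x - κ) 1 μ).toReal := by
      rw [eLpNorm_one_eq_lintegral_enorm, ← integral_norm_eq_lintegral_enorm
        (hYm.sub_const κ).aestronglyMeasurable]
      rfl
    rw [h1, ← eLpNorm_congr_ae hae]
    refine le_trans (ENNReal.toReal_mono (Lp.eLpNorm_ne_top _)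
      (eLpNorm_le_eLpNorm_of_exponent_le (q := 2) (by norm_num)
        (Lp.aestronglyMeasurable _))) ?_
    rw [← Lp.norm_def]
    exact hyz.le
  have hκle : |κ - ∫ x, ψ x ∂μ| ≤ δ / 2 := by
    rw [← hYint, abs_sub_comm]
    have : ∫ x, Y x ∂μ - κ = ∫ x, (Y x - κ) ∂μ := by
      rw [integral_sub hYi (integrable_const _)]; simp
    rw [this]
    exact (abs_integral_le_integral_abs).trans hle
  have hYκ : Integrable (fun x => |Y x - κ|) μ := (hYi.sub (integrable_const _)).abs
  calc ∫ x, |Y x - ∫ y, ψ y ∂μ| ∂μ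
      ≤ ∫ x, (|Y x - κ| + |κ - ∫ y, ψ y ∂μ|) ∂μ := by
        refine integral_mono (hYi.sub (integrable_const _)).abs
          (hYκ.add (integrable_const _)) fun x => ?_
        exact abs_sub_le _ _ _
    _ = ∫ x, |Y x - κ| ∂μ + |κ - ∫ y, ψ y ∂μ| := by
        rw [integral_add hYκ (integrable_const _)]
        simp
    _ ≤ δ := by linarith

/-- The per-site gain of coding with the `K`-word distribution instead of uniformly. -/
noncomputable def blockGain (μ : Measure (Config A d)) (K : ℕ) (x : Config A d) : ℝ :=
  1 + Real.logb A (wordDist μ K (wordAt x K 0)) / (K : ℝ) ^ d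

theorem integrable_comp_wordAt (μ : Measure (Config A d)) [IsProbabilityMeasure μ] (n : ℕ)
    (v : Site d) (f : Word A d n → ℝ) : Integrable (fun x => f (wordAt x n v)) μ := by
  refine Integrable.of_bound
    ((measurable_of_finite f).comp (measurable_wordAt n v)).aestronglyMeasurable
    (∑ w, ‖f w‖) (ae_of_all _ fun x => ?_)
  exact Finset.single_le_sum (f := fun w => ‖f w‖) (fun _ _ => norm_nonneg _) (Finset.mem_univ _)

theorem measurable_blockGain (μ : Measure (Config A d)) (K : ℕ) : Measurable (blockGain μ K) :=
  (measurable_of_finite fun w : Word A d K =>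
    1 + Real.logb A (wordDist μ K w) / (K : ℝ) ^ d).comp (measurable_wordAt K 0)

theorem exists_abs_blockGain_le (μ : Measure (Config A d)) (K : ℕ) :
    ∃ G, ∀ x, |blockGain μ K x| ≤ G :=
  ⟨∑ w, |1 + Real.logb A (wordDist μ K w) / (K : ℝ) ^ d|, fun _ =>
    Finset.single_le_sum
      (f := fun w : Word A d K => |1 + Real.logb A (wordDist μ K w) / (K : ℝ) ^ d|)
      (fun _ _ => abs_nonneg _) (Finset.mem_univ _)⟩

theorem integral_blockGain (μ : Measure (Config A d)) [IsProbabilityMeasure μ] (K : ℕ) :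
    ∫ x, blockGain μ K x ∂μ = 1 - entH A (wordDist μ K) / (K : ℝ) ^ d := by
  have h := sum_wordDist_mul μ K fun w => 1 + Real.logb A (wordDist μ K w) / (K : ℝ) ^ d
  simp only [blockGain]
  rw [← h]
  simp only [mul_add, mul_one, Finset.sum_add_distrib, sum_wordDist, entH, ← mul_div_assoc,
    ← Finset.sum_div]
  ring

theorem entH_wordDist_le_integral [NeZero A] (hA : 2 ≤ A) {μ : Measure (Config A d)}
    [IsProbabilityMeasure μ] (hμ : Stationary μ) {K N : ℕ} (hK : 0 < K) {δ θ : ℝ}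
    (P : Finset (Site d × ℕ)) (hfit : ∀ p ∈ P, Fits N p.1 p.2)
    (hP : ∑ p ∈ P, (A : ℝ) ^ (-(δ * (p.2 : ℝ) ^ d)) ≤ δ * (N : ℝ) ^ d * Real.log A)
    (B : (n : ℕ) → Finset (Word A d n))
    (hB : ∀ n, ((B n).card : ℝ) ≤ (A : ℝ) ^ ((n : ℝ) ^ d * θ + 1))
    (l : Word A d N → Finset (Site d × ℕ)) (hl : ∀ w, l w ⊆ P)
    (hdisj : ∀ w, (l w : Set (Site d × ℕ)).PairwiseDisjoint fun p => cube p.1 p.2)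
    (hlB : ∀ w, ∀ p ∈ l w, wordAt (extendWord w) p.2 p.1 ∈ B p.2)
    {Φ : Config A d → ℝ} (hΦ : Integrable Φ μ)
    (hle : ∀ x, (N : ℝ) ^ d * (1 + δ)
      - ∑ p ∈ l (wordAt x N 0), ((p.2 : ℝ) ^ d * (1 - θ - δ) - 1)
      - ∑ v ∈ freeBlocks N K (l (wordAt x N 0)), blockGain μ K (shift v x) ≤ Φ x) :
    entH A (wordDist μ N) ≤ ∫ x, Φ x ∂μ := by
  have hKd : (0 : ℝ) < (K : ℝ) ^ d := by positivity
  set F : Word A d N → ℝ := fun w => (N : ℝ) ^ d * (1 + δ)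
    - ∑ p ∈ l w, ((p.2 : ℝ) ^ d * (1 - θ - δ) - 1)
    - ∑ v ∈ freeBlocks N K (l w), blockGain μ K (shift v (extendWord w)) with hF
  have h1 : (K : ℝ) ^ d * entH A (wordDist μ N) ≤ (K : ℝ) ^ d * ∑ w, wordDist μ N w * F w := by
    have h2 := Finset.sum_le_sum fun o (_ : o ∈ cube (0 : Site d) K) =>
      entH_wordDist_le hA hμ hK o P hfit hP B hB l hl hdisj hlB
    rw [Finset.sum_const, card_cube, nsmul_eq_mul, Finset.sum_comm] at h2
    push_cast at h2
    refine h2.trans_eq ?_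
    rw [Finset.mul_sum]
    refine Finset.sum_congr rfl fun w _ => ?_
    rw [← Finset.mul_sum, Finset.sum_sub_distrib, sum_residues hK, Finset.sum_const, card_cube,
      nsmul_eq_mul, mul_left_comm]
    push_cast
    congr 1
    rw [hF]
    simp only [mul_sub _ _ (∑ v ∈ freeBlocks N K (l w), _)]
    congr 1
    rw [Finset.mul_sum]
    refine Finset.sum_congr rfl fun v _ => ?_
    rw [blockGain, wordAt_shift_zero]
    field_simp
  refine (le_of_mul_le_mul_left h1 hKd).trans ?_
  rw [sum_wordDist_mul]
  refine integral_mono (integrable_comp_wordAt μ N 0 F) hΦ fun x => le_trans (le_of_eq ?_) (hle x)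
  simp only [hF]
  congr 1
  refine Finset.sum_congr rfl fun v hv => ?_
  have hv' : Fits N v K := by
    classical
    exact (Finset.mem_filter.1 hv).2.1
  rw [blockGain, blockGain, wordAt_shift_zero, wordAt_shift_zero, wordAt_extendWord_wordAt x hv']

theorem Stationary.integral_comp_shift {μ : Measure (Config A d)} (hμ : Stationary μ) (v : Site d)
    {f : Config A d → ℝ} (hf : Measurable f) : ∫ x, f (shift v x) ∂μ = ∫ x, f x ∂μ := by
  have h := integral_map (μ := μ) (measurable_shift (A := A) v).aemeasurable
    (f := f) hf.aestronglyMeasurable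
  rw [← h, hμ v]

/-- The pointwise bound on the integrand of `entH_wordDist_le_integral`. -/
theorem gain_le {ψ : Site d → ℝ} {κ h θ δ G : ℝ} {N K m R : ℕ} {l : Finset (Site d × ℕ)}
    (hN : m ≤ N) (hm : 0 < m) (hK : 0 < K) (hKR : K ≤ R) (hd : 1 ≤ d)
    (hfit : ∀ p ∈ l, Fits N p.1 p.2)
    (hdisj : (l : Set (Site d × ℕ)).PairwiseDisjoint fun p => cube p.1 p.2)
    (hl : ∀ p ∈ l, m ≤ p.2) (hψ : ∀ v, |ψ v| ≤ G)
    (s : Finset (Site d)) (c : Site d → ℝ) (hc : ∀ r ∈ s, 0 ≤ c r) (hc1 : ∑ r ∈ s, c r = 1)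
    (hs : ∀ r ∈ s, ∀ j, r j ≤ R) (hκ : |κ - (1 - h)| ≤ δ) (hδm : 1 ≤ δ * m)
    (hβ : (K ^ d + 2) * G * (d * R * 2) ≤ δ * m) :
    (N : ℝ) ^ d * (1 + δ) - ∑ p ∈ l, ((p.2 : ℝ) ^ d * (1 - θ - δ) - 1)
      - ∑ v ∈ freeBlocks N K l, ψ v ≤
    (N : ℝ) ^ d * (h + 3 * δ) - (h - θ - 3 * δ) * ∑ p ∈ l, (p.2 : ℝ) ^ d
      + ∑ v ∈ cube 0 N, |∑ r ∈ s, c r * ψ (v + r) - κ| := by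
  obtain ⟨hκ1, hκ2⟩ := abs_le.1 hκ
  have hN0 : 0 < N := hm.trans_le hN
  have hm' : (0 : ℝ) < m := by exact_mod_cast hm
  have hN' : (m : ℝ) ≤ N := by exact_mod_cast hN
  have hG : 0 ≤ G := (abs_nonneg _).trans (hψ 0)
  have hδ : 0 < δ := by
    by_contra hcon
    nlinarith
  set D : ℝ := ∑ p ∈ l, (p.2 : ℝ) ^ d with hD
  have hcard : (l.card : ℝ) ≤ δ * D := by
    rw [hD, Finset.mul_sum, Finset.card_eq_sum_ones, Nat.cast_sum]
    refine Finset.sum_le_sum fun p hp => ?_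
    have h1 : (m : ℝ) ≤ (p.2 : ℝ) ^ d := by
      have : m ≤ p.2 ^ d := (hl p hp).trans (Nat.le_self_pow (by omega) _)
      exact_mod_cast this
    push_cast
    nlinarith
  have hU : ((uncovered N l).card : ℝ) = (N : ℝ) ^ d - D := by
    have h1 := card_uncovered_add hfit hdisj
    have h2 : ((uncovered N l).card : ℝ) + D = (N : ℝ) ^ d := by
      rw [hD]
      exact_mod_cast h1
    linarith
  have hD0 : 0 ≤ D := Finset.sum_nonneg fun _ _ => by positivity
  have hlsum : ∑ p ∈ l, ((p.2 : ℝ) ^ d * (1 - θ - δ) - 1) = D * (1 - θ - δ) - l.card := by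
    rw [Finset.sum_sub_distrib, ← Finset.sum_mul]
    simp [hD]
  have hfree := sum_freeBlocks_ge hN0 hm hK hKR hfit hdisj hl ψ hψ s c hc hc1 hs
  have herr : (K ^ d + 2) * G * (d * R * (1 / N + 1 / m)) * (N : ℝ) ^ d ≤ δ * (N : ℝ) ^ d := by
    gcongr
    have h1 : (1 : ℝ) / N ≤ 1 / m := one_div_le_one_div_of_le hm' hN'
    calc (K ^ d + 2) * G * (d * R * (1 / N + 1 / m))
        ≤ (K ^ d + 2) * G * (d * R * (1 / m + 1 / m)) := by gcongr
      _ = (K ^ d + 2) * G * (d * R * 2) / m := by ring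
      _ ≤ δ := by rwa [div_le_iff₀ hm']
  have havg : (uncovered N l).card * κ - ∑ v ∈ cube 0 N, |∑ r ∈ s, c r * ψ (v + r) - κ| ≤
      ∑ v ∈ uncovered N l, ∑ r ∈ s, c r * ψ (v + r) := by
    have h1 : ∑ v ∈ uncovered N l, |∑ r ∈ s, c r * ψ (v + r) - κ| ≤
        ∑ v ∈ cube 0 N, |∑ r ∈ s, c r * ψ (v + r) - κ| :=
      Finset.sum_le_sum_of_subset_of_nonneg Finset.sdiff_subset fun _ _ _ => abs_nonneg _
    have h2 : ∑ v ∈ uncovered N l, (κ - ∑ r ∈ s, c r * ψ (v + r)) ≤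
        ∑ v ∈ uncovered N l, |∑ r ∈ s, c r * ψ (v + r) - κ| :=
      Finset.sum_le_sum fun v _ => by rw [abs_sub_comm]; exact le_abs_self _
    rw [Finset.sum_sub_distrib, Finset.sum_const, nsmul_eq_mul] at h2
    linarith
  rw [hU] at havg
  have hU0 : 0 ≤ (N : ℝ) ^ d - D := hU ▸ Nat.cast_nonneg _
  rw [hlsum]
  nlinarith

/-- If each word has enough short codewords in it, then the entropy drops. -/
theorem entH_wordDist_le_sub [NeZero A] (hA : 2 ≤ A) (hd : 1 ≤ d) {μ : Measure (Config A d)}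
    [IsProbabilityMeasure μ] (hμ : Stationary μ) {K N m M R : ℕ} {h θ δ G κ : ℝ}
    (hMN : M ≤ N) (hmM : m ≤ M) (hm : 0 < m) (hK : 0 < K) (hKR : K ≤ R)
    (hG : ∀ x, |blockGain μ K x| ≤ G)
    (s : Finset (Site d)) (c : Site d → ℝ) (hc : ∀ r ∈ s, 0 ≤ c r) (hc1 : ∑ r ∈ s, c r = 1)
    (hs : ∀ r ∈ s, ∀ j, r j ≤ R) (hκ : |κ - (1 - h)| ≤ δ) (hδm : 1 ≤ δ * m)
    (hβ : (K ^ d + 2) * G * (d * R * 2) ≤ δ * m)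
    (havg : ∫ x, |∑ r ∈ s, c r * blockGain μ K (shift r x) - κ| ∂μ ≤ δ)
    (htail : ∑ n ∈ Finset.Icc m M, (A : ℝ) ^ (-(δ * (n : ℝ) ^ d)) ≤ δ * Real.log A)
    (hθ : θ + 3 * δ ≤ h) (B : (n : ℕ) → Finset (Word A d n))
    (hB : ∀ n, ((B n).card : ℝ) ≤ (A : ℝ) ^ ((n : ℝ) ^ d * θ + 1)) :
    entH A (wordDist μ N) ≤ (N : ℝ) ^ d * (h + 4 * δ) - (h - θ - 3 * δ) *
      (((N : ℝ) - M) ^ d * μ.real {x | ∃ n ∈ Finset.Icc m M, wordAt x n 0 ∈ B n} / 3 ^ d) := by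
  classical
  set P : Finset (Site d × ℕ) := {p ∈ cube 0 N ×ˢ Finset.Icc m M | Fits N p.1 p.2} with hPdef
  have hfit : ∀ p ∈ P, Fits N p.1 p.2 := fun p hp => (Finset.mem_filter.1 hp).2
  have hPm : ∀ p ∈ P, m ≤ p.2 := fun p hp =>
    (Finset.mem_Icc.1 (Finset.mem_product.1 (Finset.mem_filter.1 hp).1).2).1
  have hP : ∑ p ∈ P, (A : ℝ) ^ (-(δ * (p.2 : ℝ) ^ d)) ≤ δ * (N : ℝ) ^ d * Real.log A := by
    calc ∑ p ∈ P, (A : ℝ) ^ (-(δ * (p.2 : ℝ) ^ d))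
        ≤ ∑ p ∈ cube (0 : Site d) N ×ˢ Finset.Icc m M, (A : ℝ) ^ (-(δ * (p.2 : ℝ) ^ d)) :=
          Finset.sum_le_sum_of_subset_of_nonneg (Finset.filter_subset _ _)
            fun _ _ _ => by positivity
      _ = (N : ℝ) ^ d * ∑ n ∈ Finset.Icc m M, (A : ℝ) ^ (-(δ * (n : ℝ) ^ d)) := by
          rw [Finset.sum_product]
          simp only [Finset.sum_const, card_cube, nsmul_eq_mul, Nat.cast_pow]
      _ ≤ (N : ℝ) ^ d * (δ * Real.log A) := by gcongr
      _ = _ := by ring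
  let J : Word A d N → Finset (Site d × ℕ) := fun w =>
    {p ∈ P | wordAt (extendWord w) p.2 p.1 ∈ B p.2}
  have hJP : ∀ w, J w ⊆ P := fun w => Finset.filter_subset _ _
  choose l hlJ hdisj hcov using fun w =>
    exists_disjoint_cubes (J w) fun p hp => hm.trans_le (hPm p (hJP w hp))
  have hl : ∀ w, l w ⊆ P := fun w => (hlJ w).trans (hJP w)
  have hlB : ∀ w, ∀ p ∈ l w, wordAt (extendWord w) p.2 p.1 ∈ B p.2 := fun w p hp =>
    (Finset.mem_filter.1 (hlJ w hp)).2
  set D : Word A d N → ℝ := fun w => ∑ p ∈ l w, (p.2 : ℝ) ^ d with hD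
  set g : Config A d → ℝ := fun x => |∑ r ∈ s, c r * blockGain μ K (shift r x) - κ| with hg
  have hgm : Measurable g := ((Finset.measurable_sum s fun r _ =>
    ((measurable_blockGain μ K).comp (measurable_shift r)).const_mul (c r)).sub_const κ).abs
  have hgb : ∀ x, ‖g x‖ ≤ ∑ r ∈ s, c r * G + |κ| := by
    intro x
    rw [hg, Real.norm_eq_abs, abs_abs]
    refine (abs_sub _ _).trans (add_le_add_left ?_ _)
    refine (Finset.abs_sum_le_sum_abs _ _).trans (Finset.sum_le_sum fun r hr => ?_)
    rw [abs_mul, abs_of_nonneg (hc r hr)]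
    exact mul_le_mul_of_nonneg_left (hG _) (hc r hr)
  have hgi : ∀ v, Integrable (fun x => g (shift v x)) μ := fun v =>
    Integrable.of_bound (hgm.comp (measurable_shift v)).aestronglyMeasurable _
      (ae_of_all _ fun x => hgb _)
  have hDi : Integrable (fun x => D (wordAt x N 0)) μ := integrable_comp_wordAt μ N 0 D
  have hgs : Integrable (fun x => ∑ v ∈ cube 0 N, g (shift v x)) μ :=
    integrable_finsetSum _ fun v _ => hgi v
  have hDi' : Integrable
      (fun x => (N : ℝ) ^ d * (h + 3 * δ) - (h - θ - 3 * δ) * D (wordAt x N 0)) μ :=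
    (integrable_const _).sub (hDi.const_mul _)
  have hmain := entH_wordDist_le_integral hA hμ hK P hfit hP B hB l hl hdisj hlB
    (Φ := fun x => (N : ℝ) ^ d * (h + 3 * δ) - (h - θ - 3 * δ) * D (wordAt x N 0)
      + ∑ v ∈ cube 0 N, g (shift v x))
    (hDi'.add hgs) fun x => by
      have := gain_le (ψ := fun v => blockGain μ K (shift v x)) (θ := θ) (hmM.trans hMN) hm hK hKR
        hd (fun p hp => hfit p (hl (wordAt x N 0) hp)) (hdisj (wordAt x N 0))
        (fun p hp => hPm p (hl _ hp)) (fun v => hG _) s c hc hc1 hs hκ hδm hβ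
      refine this.trans_eq ?_
      simp only [hg, hD, shift_shift, add_comm]
  rw [integral_add hDi' hgs,
    integral_sub (integrable_const _) (hDi.const_mul _), integral_finsetSum _ fun v _ => hgi v,
    integral_const_mul (h - θ - 3 * δ)] at hmain
  simp only [hμ.integral_comp_shift _ hgm, Finset.sum_const, card_cube, nsmul_eq_mul,
    integral_const, probReal_univ, one_smul, Nat.cast_pow] at hmain
  set E : Set (Config A d) := {x | ∃ n ∈ Finset.Icc m M, wordAt x n 0 ∈ B n} with hE
  have hEm : MeasurableSet E := by
    have : E = ⋃ n ∈ Finset.Icc m M, (fun x => wordAt x n 0) ⁻¹' (B n : Set (Word A d n)) := by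
      ext x
      simp [hE]
    rw [this]
    exact Finset.measurableSet_biUnion _ fun n _ =>
      measurable_wordAt n 0 (Set.toFinite _).measurableSet
  have hDE : ((N : ℝ) - M) ^ d * μ.real E / 3 ^ d ≤ ∫ x, D (wordAt x N 0) ∂μ := by
    have hind : Measurable (E.indicator (1 : Config A d → ℝ)) := measurable_one.indicator hEm
    have hindi : ∀ v, Integrable (fun x => E.indicator (1 : Config A d → ℝ) (shift v x)) μ :=
      fun v => Integrable.of_bound (hind.comp (measurable_shift v)).aestronglyMeasurable 1
        (ae_of_all _ fun x => by
          by_cases hx : shift v x ∈ E <;> simp [hx])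
    have h1 : ((N : ℝ) - M) ^ d * μ.real E =
        ∫ x, ∑ v ∈ cube 0 (N - M), E.indicator (1 : Config A d → ℝ) (shift v x) ∂μ := by
      rw [integral_finsetSum _ fun v _ => hindi v]
      simp only [hμ.integral_comp_shift _ hind, integral_indicator_one hEm, Finset.sum_const,
        card_cube, nsmul_eq_mul, Nat.cast_pow, Nat.cast_sub hMN]
    rw [h1, div_le_iff₀ (by positivity), ← integral_mul_const]
    refine integral_mono (integrable_finsetSum _ fun v _ => hindi v) (hDi.mul_const _) fun x => ?_
    have h2 : {v ∈ cube 0 (N - M) | shift v x ∈ E} ⊆ (J (wordAt x N 0)).image Prod.fst := by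
      intro v hv
      obtain ⟨hv, n, hn, hnB⟩ := Finset.mem_filter.1 hv
      have hnM := (Finset.mem_Icc.1 hn).2
      have hfitv : Fits N v n := fun j => by
        have := (mem_cube.1 hv j).2
        simp only [Pi.zero_apply] at this
        omega
      refine Finset.mem_image.2 ⟨(v, n), Finset.mem_filter.2 ⟨Finset.mem_filter.2
        ⟨Finset.mem_product.2 ⟨mem_cube.2 fun j => ⟨Nat.zero_le _, ?_⟩, hn⟩, hfitv⟩, ?_⟩, rfl⟩
      · have := (mem_cube.1 hv j).2
        simp only [Pi.zero_apply] at this ⊢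
        omega
      · dsimp only
        rwa [wordAt_extendWord_wordAt x hfitv, ← wordAt_shift_zero]
    have h3 := (Finset.card_le_card h2).trans (hcov (wordAt x N 0))
    have h4 : ∑ v ∈ cube 0 (N - M), E.indicator (1 : Config A d → ℝ) (shift v x) =
        (({v ∈ cube 0 (N - M) | shift v x ∈ E} : Finset (Site d)).card : ℝ) := by
      rw [Finset.card_filter]
      push_cast
      exact Finset.sum_congr rfl fun v _ => by by_cases hv : shift v x ∈ E <;> simp [hv]
    simp only [h4, hD]
    rw [mul_comm]
    exact_mod_cast h3
  have h5 := mul_le_mul_of_nonneg_left hDE (by linarith : 0 ≤ h - θ - 3 * δ)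
  have h6 : (N : ℝ) ^ d * ∫ x, g x ∂μ ≤ (N : ℝ) ^ d * δ := by gcongr
  linarith

/-- There are at most `A ^ (t + 1)` strings of length at most `t`. -/
theorem card_le_rpow_of_length_le (hA : 2 ≤ A) {W : Type*} {f : W → List (Fin A)}
    (hf : Function.Injective f) {s : Finset W} {t : ℝ} (hs : ∀ w ∈ s, ((f w).length : ℝ) ≤ t) :
    (s.card : ℝ) ≤ (A : ℝ) ^ (t + 1) := by
  classical
  rcases s.eq_empty_or_nonempty with rfl | ⟨w₀, hw₀⟩
  · simp only [Finset.card_empty, Nat.cast_zero]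
    positivity
  have ht : 0 ≤ t := (Nat.cast_nonneg _).trans (hs w₀ hw₀)
  have h1 : s.card = ∑ i ∈ Finset.range (⌊t⌋₊ + 1), {w ∈ s | (f w).length = i}.card :=
    Finset.card_eq_sum_card_fiberwise fun w hw => by
      simpa [Nat.lt_succ_iff] using Nat.le_floor (hs w hw)
  have h2 : ∀ i, {w ∈ s | (f w).length = i}.card ≤ A ^ i := by
    intro i
    let g : {w // w ∈ ({w ∈ s | (f w).length = i} : Finset W)} → List.Vector (Fin A) i :=
      fun w => ⟨f w, (Finset.mem_filter.1 w.2).2⟩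
    have h3 := Fintype.card_le_of_injective g
      fun w w' hww => Subtype.ext (hf (congrArg Subtype.val hww))
    simpa only [Fintype.card_coe, card_vector, Fintype.card_fin] using h3
  have h4 : s.card ≤ A ^ (⌊t⌋₊ + 1) := by
    rw [h1]
    exact (Finset.sum_le_sum fun i _ => h2 i).trans
      (Nat.geomSum_lt hA fun k hk => Finset.mem_range.1 hk).le
  calc (s.card : ℝ) ≤ (A : ℝ) ^ (⌊t⌋₊ + 1) := by exact_mod_cast h4
    _ = (A : ℝ) ^ ((⌊t⌋₊ : ℝ) + 1) := by rw [← Real.rpow_natCast]; push_cast; rfl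
    _ ≤ (A : ℝ) ^ (t + 1) := by
      have : (1 : ℝ) ≤ A := by exact_mod_cast (by omega : 1 ≤ A)
      gcongr
      exact Nat.floor_le ht

theorem eventually_sum_rpow_neg_le (hA : 2 ≤ A) (hd : 1 ≤ d) {δ : ℝ} (hδ : 0 < δ) :
    ∀ᶠ m : ℕ in atTop, ∀ M : ℕ,
      ∑ n ∈ Finset.Icc m M, (A : ℝ) ^ (-(δ * (n : ℝ) ^ d)) ≤ δ * Real.log A := by
  have hA1 : (1 : ℝ) < A := by exact_mod_cast (by omega : 1 < A)
  set r : ℝ := (A : ℝ) ^ (-δ) with hr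
  have hr0 : 0 ≤ r := by positivity
  have hr1 : r < 1 := Real.rpow_lt_one_of_one_lt_of_neg hA1 (by linarith)
  have hlim : Tendsto (fun m : ℕ => r ^ m / (1 - r)) atTop (𝓝 0) := by
    simpa using (tendsto_pow_atTop_nhds_zero_of_lt_one hr0 hr1).div_const (1 - r)
  filter_upwards [hlim.eventually_le_const (mul_pos hδ (Real.log_pos hA1))] with m hm M
  refine le_trans ?_ hm
  refine le_trans (Finset.sum_le_sum fun n _ => ?_) (geom_sum_Ico_le_of_lt_one hr0 hr1 (n := M + 1))
  · rw [hr, ← Real.rpow_natCast ((A : ℝ) ^ (-δ)) n, ← Real.rpow_mul (by positivity)]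
    refine Real.rpow_le_rpow_of_exponent_le hA1.le ?_
    have : (n : ℝ) ≤ (n : ℝ) ^ d := by exact_mod_cast Nat.le_self_pow (by omega) n
    nlinarith

theorem eventually_half_pow_le_sub_pow (d M : ℕ) :
    ∀ᶠ N : ℕ in atTop, (N : ℝ) ^ d / 2 ≤ ((N : ℝ) - M) ^ d := by
  have h1 : Tendsto (fun N : ℕ => (1 - (M : ℝ) / N) ^ d) atTop (𝓝 1) := by
    simpa using ((tendsto_const_div_atTop_nhds_zero_nat (M : ℝ)).const_sub 1).pow d
  filter_upwards [h1.eventually_const_le (by norm_num : (1 / 2 : ℝ) < 1), eventually_gt_atTop 0]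
    with N hN hN0
  have hN0' : (0 : ℝ) < N := by exact_mod_cast hN0
  calc (N : ℝ) ^ d / 2 = (N : ℝ) ^ d * (1 / 2) := by ring
    _ ≤ (N : ℝ) ^ d * (1 - (M : ℝ) / N) ^ d := by gcongr
    _ = ((N : ℝ) - M) ^ d := by rw [← mul_pow]; congr 1; field_simp

/-- Events that occur infinitely often with positive probability occur in some finite range of
times with at least half that probability. -/
theorem exists_half_le_measureReal {Ω : Type*} [MeasurableSpace Ω] {μ : Measure Ω}
    [IsProbabilityMeasure μ] {Q : Ω → ℕ → Prop} (hQ : 0 < μ.real {x | ∃ᶠ n in atTop, Q x n})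
    (m : ℕ) : ∃ M, m ≤ M ∧ μ.real {x | ∃ᶠ n in atTop, Q x n} / 2 ≤
      μ.real {x | ∃ n ∈ Finset.Icc m M, Q x n} := by
  set T : ℕ → Set Ω := fun M => {x | ∃ n ∈ Finset.Icc m M, Q x n} with hT
  have hmono : Monotone T := fun M M' hM x ⟨n, hn, hx⟩ =>
    ⟨n, Finset.Icc_subset_Icc_right hM hn, hx⟩
  have hsub : {x | ∃ᶠ n in atTop, Q x n} ⊆ ⋃ M, T M := by
    intro x hx
    obtain ⟨n, hn, hxn⟩ := frequently_atTop.1 hx m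
    exact Set.mem_iUnion.2 ⟨n, n, Finset.mem_Icc.2 ⟨hn, le_rfl⟩, hxn⟩
  have hlim : Tendsto (fun M => μ.real (T M)) atTop (𝓝 (μ.real (⋃ M, T M))) :=
    (ENNReal.tendsto_toReal (measure_ne_top _ _)).comp (tendsto_measure_iUnion_atTop hmono)
  have hlt : μ.real {x | ∃ᶠ n in atTop, Q x n} / 2 < μ.real (⋃ M, T M) :=
    (half_lt_self hQ).trans_le (measureReal_mono hsub)
  obtain ⟨M, hM, hmM⟩ := ((hlim.eventually_const_le hlt).and (eventually_ge_atTop m)).exists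
  exact ⟨M, hmM, hM⟩

/-- no sequence of lossless codes beats the entropy bound infinitely
often. For any sequence of injective maps `φ_n` from `n`-words to finite strings over the
alphabet and any `ε > 0`, almost surely `|φ_n(x^n)| > n^d (h - ε)` eventually. -/
theorem no_code_beats_entropy
    (A d : ℕ) (hA : 2 ≤ A) (hd : 1 ≤ d)
    (μ : Measure (Config A d)) [IsProbabilityMeasure μ] (hμ : ErgodicShift μ)
    (h : ℝ) (hrate : HasEntropyRate μ h) (ε : ℝ) (hε : 0 < ε)
    (coder : (n : ℕ) → Word A d n → List (Fin A))
    (hinj : ∀ n, Function.Injective (coder n)) :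
    ∀ᵐ x ∂μ, ∀ᶠ n : ℕ in atTop,
      (n : ℝ) ^ d * (h - ε) < ((coder n (wordAt x n 0)).length : ℝ) := by
  classical
  have : NeZero A := ⟨by omega⟩
  set B : (n : ℕ) → Finset (Word A d n) := fun n =>
    {w | ((coder n w).length : ℝ) ≤ (n : ℝ) ^ d * (h - ε)} with hBdef
  have hB : ∀ n, ((B n).card : ℝ) ≤ (A : ℝ) ^ ((n : ℝ) ^ d * (h - ε) + 1) := fun n =>
    card_le_rpow_of_length_le hA (hinj n) fun w hw => (Finset.mem_filter.1 hw).2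
  set E : Set (Config A d) := {x | ∃ᶠ n : ℕ in atTop, wordAt x n 0 ∈ B n} with hE
  suffices hE0 : μ E = 0 by
    filter_upwards [measure_eq_zero_iff_ae_notMem.1 hE0] with x hx
    filter_upwards [not_frequently.1 hx] with n hn
    simpa [hBdef] using hn
  by_contra hpos
  have ha : 0 < μ.real E := ENNReal.toReal_pos hpos (measure_ne_top _ _)
  have ha1 : μ.real E ≤ 1 := measureReal_le_one
  have h3 : (1 : ℝ) ≤ 3 ^ d := one_le_pow₀ (by norm_num)
  obtain ⟨δ, hδeq⟩ : ∃ δ, δ = ε * μ.real E / 3 ^ d / 48 := ⟨_, rfl⟩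
  have hδ : 0 < δ := by rw [hδeq]; positivity
  have hδε : δ ≤ ε / 48 := by
    have h1 : ε * μ.real E / 3 ^ d ≤ ε := by
      rw [div_le_iff₀ (by positivity)]
      nlinarith
    linarith
  obtain ⟨K, hKr, hK⟩ := ((hrate.eventually (Metric.closedBall_mem_nhds h hδ)).and
    (eventually_gt_atTop 0)).exists
  obtain ⟨G, hG⟩ := exists_abs_blockGain_le μ K
  obtain ⟨s, c, hc, hc1, havg⟩ := hμ.exists_average (measurable_blockGain μ K) hG hδ
  have hκ : |∫ x, blockGain μ K x ∂μ - (1 - h)| ≤ δ := by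
    rw [integral_blockGain, abs_sub_comm]
    rw [Real.dist_eq] at hKr
    convert hKr using 2
    ring
  set R : ℕ := K + ∑ r ∈ s, ∑ j, r j with hR
  have hs : ∀ r ∈ s, ∀ j, r j ≤ R := fun r hr j =>
    (Finset.single_le_sum (f := r) (fun _ _ => Nat.zero_le _) (Finset.mem_univ j)).trans <|
      (Finset.single_le_sum (f := fun r : Site d => ∑ j, r j) (fun _ _ => Nat.zero_le _) hr).trans
        (Nat.le_add_left _ _)
  have hlin : Tendsto (fun m : ℕ => δ * (m : ℝ)) atTop atTop :=
    tendsto_natCast_atTop_atTop.const_mul_atTop hδ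
  obtain ⟨m, ⟨⟨hm1, hm2⟩, hm3⟩, hm⟩ := ((((hlin.eventually_ge_atTop 1).and
    (hlin.eventually_ge_atTop ((K ^ d + 2) * G * (d * R * 2)))).and
    (eventually_sum_rpow_neg_le hA hd hδ)).and (eventually_gt_atTop 0)).exists
  obtain ⟨M, hmM, hM⟩ := exists_half_le_measureReal (Q := fun x n => wordAt x n 0 ∈ B n) ha m
  obtain ⟨N, ⟨hN1, hN2⟩, hN3, hN⟩ := (((hrate.eventually_const_le (sub_lt_self h hδ)).and
    (eventually_half_pow_le_sub_pow d M)).and ((eventually_ge_atTop M).and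
    (eventually_gt_atTop 0))).exists
  have hmain := entH_wordDist_le_sub (θ := h - ε) hA hd hμ.1 hN3 hmM hm hK
    (Nat.le_add_right K _ : K ≤ R) hG s c hc hc1 hs hκ hm1 hm2 havg (hm3 M) (by linarith) B hB
  have hV : (0 : ℝ) < (N : ℝ) ^ d := by positivity
  rw [le_div_iff₀ hV] at hN1
  set X : ℝ := ((N : ℝ) - M) ^ d *
    μ.real {x | ∃ n ∈ Finset.Icc m M, wordAt x n 0 ∈ B n} / 3 ^ d with hX
  have hNM : (0 : ℝ) ≤ ((N : ℝ) - M) ^ d := by linarith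
  have hX1 : (N : ℝ) ^ d / 2 * (μ.real E / 2) / 3 ^ d ≤ X := by
    rw [hX]
    gcongr
  have hX2 : (N : ℝ) ^ d * (6 * δ) ≤ ε / 2 * X := by
    calc (N : ℝ) ^ d * (6 * δ) = ε / 2 * ((N : ℝ) ^ d / 2 * (μ.real E / 2) / 3 ^ d) := by
          rw [hδeq]; ring
      _ ≤ ε / 2 * X := by gcongr
  have hX0 : 0 ≤ X := le_trans (by positivity) hX1
  have hX3 : ε / 2 * X ≤ (h - (h - ε) - 3 * δ) * X := by
    gcongr
    linarith
  nlinarith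

end SRU1408
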